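/- For 1 ≤ r ≤ x/4, ∑_{√(x/r) < p ≤ √x} π(x/p) = ∫_{√(x/r)}^{√x} Li(x/u)/(log u) du + O((x/log x)·exp(−c·√(log(x/r)))), where the sum is over primes, for some absolute constant c > 0. -/

import Mathlib

open scoped Classical

/-- The prime counting function with real argument. -/
noncomputable def primePi (y : ℝ) : ℕ := {p : ℕ | p.Prime ∧ (p : ℝ) ≤ y}.ncard

/-- The logarithmic integral `Li y = ∫₂^y du / log u`. -/
noncomputable def Li (y : ℝ) : ℝ := ∫ u in (2 : ℝ)..y, 1 / Real.log u

section
open Complex Metric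

/-- summands in the series for `(s-1) ζ(s)` -/
noncomputable def zTerm (n : ℕ) (s : ℂ) : ℂ :=
  (s - 1) * ((n + 1 : ℝ) : ℂ) ^ (-s) + ((n + 2 : ℝ) : ℂ) ^ (1 - s) - ((n + 1 : ℝ) : ℂ) ^ (1 - s)

lemma zTerm_bound (n : ℕ) {s : ℂ} (hs : 1 / 4 < s.re) :
    ‖zTerm n s‖ ≤ ‖s - 1‖ * ‖s‖ * (n + 1 : ℝ) ^ (-(5 / 4) : ℝ) := by
  set m : ℝ := n + 1 with hm
  have hm1 : 1 ≤ m := by rw [hm]; linarith [(Nat.cast_nonneg n : (0:ℝ) ≤ n)]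
  set K : ℝ := m ^ (-(5/4) : ℝ) with hK
  have hm2 : (n + 2 : ℝ) = m + 1 := by rw [hm]; ring
  have hder : ∀ (a : ℂ) (u : ℝ), 0 < u → HasDerivAt (fun u : ℝ => (u : ℂ) ^ a) (a * (u : ℂ) ^ (a - 1)) u := by
    intro a u hu
    have h1 := (hasDerivAt_id (u : ℂ)).cpow_const (c := a) (Or.inl hu)
    simpa using h1.comp_ofReal
  have h1 : ∀ u ∈ Set.Icc m (m+1), ‖(u:ℂ) ^ (-s) - (m:ℂ) ^ (-s)‖ ≤ ‖s‖ * K := by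
    intro u hu
    have := norm_image_sub_le_of_norm_deriv_le_segment' (f := fun u : ℝ => (u : ℂ) ^ (-s))
      (f' := fun u => (-s) * (u : ℂ) ^ (-s - 1)) (a := m) (b := m+1) (C := ‖s‖ * K)
      (fun x hx => (hder (-s) x (by linarith [hx.1])).hasDerivWithinAt) ?_ u hu
    · refine this.trans ?_
      have h2 : u - m ≤ 1 := by linarith [hu.2]
      have h3 : 0 ≤ ‖s‖ * K := by positivity
      nlinarith [hu.1]
    · intro x hx
      have hx0 : 0 < x := by linarith [hx.1]
      rw [norm_mul, norm_neg, norm_cpow_eq_rpow_re_of_pos hx0]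
      gcongr
      have : (-s - 1).re ≤ -(5/4) := by simp; linarith
      calc x ^ (-s - 1).re ≤ x ^ (-(5/4) : ℝ) := Real.rpow_le_rpow_of_exponent_le (by linarith [hx.1]) this
        _ ≤ K := Real.rpow_le_rpow_of_nonpos (by linarith) hx.1 (by norm_num)
  have := norm_image_sub_le_of_norm_deriv_le_segment' (f := fun u : ℝ => (u : ℂ) ^ (1-s) - (1 - s) * (m:ℂ)^(-s) * (u:ℂ))
      (f' := fun u => (1-s) * (u : ℂ) ^ (1 - s - 1) - (1 - s) * (m:ℂ)^(-s) * 1) (a := m) (b := m+1) (C := ‖s - 1‖ * ‖s‖ * K)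
      (fun x hx => ((hder (1-s) x (by linarith [hx.1])).sub
        (((hasDerivAt_id (x:ℂ)).comp_ofReal).const_mul _)).hasDerivWithinAt) ?_ (m+1) ⟨by linarith, le_refl _⟩
  · rw [zTerm, hm2, ← hm]
    simp only [add_sub_cancel_left, mul_one] at this
    convert! this using 2
    push_cast
    ring
  · intro x hx
    have : (1-s) * (x : ℂ) ^ (1 - s - 1) - (1 - s) * (m:ℂ)^(-s) * 1 = (1 - s) * ((x:ℂ)^(-s) - (m:ℂ)^(-s)) := by
      rw [show 1 - s - 1 = -s by ring]; ring
    rw [this, norm_mul, norm_sub_rev, mul_assoc]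
    gcongr
    exact h1 x ⟨hx.1, hx.2.le⟩

lemma zTerm_summable_bound : Summable (fun n : ℕ => ((n : ℝ) + 1) ^ (-(5 / 4) : ℝ)) := by
  have := (summable_nat_add_iff 1).mpr (Real.summable_nat_rpow (p := -(5/4)) |>.mpr (by norm_num))
  simpa using this

lemma zTerm_tsum {s : ℂ} (hs : 1 < s.re) : 1 + ∑' n, zTerm n s = riemannZeta₁ s := by
  have hs1 : s ≠ 1 := by rintro rfl; simp at hs
  have h1 : HasSum (fun n : ℕ => ((n + 1 : ℝ) : ℂ) ^ (-s)) (riemannZeta s) := by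
    have h := zeta_eq_tsum_one_div_nat_add_one_cpow hs
    have hsum : Summable (fun n : ℕ => 1 / ((n:ℂ) + 1) ^ s) := by
      have := (summable_nat_add_iff 1).mpr (Complex.summable_one_div_nat_cpow.mpr hs)
      simpa using this
    rw [h]
    convert! hsum.hasSum using 2
    push_cast
    rw [cpow_neg, one_div]
  have h2 : HasSum (fun n : ℕ => ((n + 2 : ℝ) : ℂ) ^ (1 - s) - ((n + 1 : ℝ) : ℂ) ^ (1 - s)) (-1) := by
    have hT : Summable (fun n : ℕ => ((n + 2 : ℝ) : ℂ) ^ (1 - s) - ((n + 1 : ℝ) : ℂ) ^ (1 - s)) := by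
      have ha : Summable (fun n => zTerm n s) :=
        Summable.of_norm_bounded ((zTerm_summable_bound).mul_left (‖s - 1‖ * ‖s‖)) (fun n => zTerm_bound n (by linarith))
      have := ha.sub (h1.summable.mul_left (s-1))
      refine this.congr (fun n => ?_)
      simp only [zTerm]; ring
    have ht := hT.hasSum.tendsto_sum_nat
    have e : ∀ N : ℕ, ∑ n ∈ Finset.range N, (((n + 2 : ℝ) : ℂ) ^ (1 - s) - ((n + 1 : ℝ) : ℂ) ^ (1 - s)) = ((N + 1 : ℝ) : ℂ) ^ (1 - s) - 1 := by
      intro N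
      induction N with
      | zero => simp
      | succ N ih =>
        rw [Finset.sum_range_succ, ih]; push_cast; ring_nf
    simp_rw [e] at ht
    have ht2 : Filter.Tendsto (fun N : ℕ => ((N + 1 : ℝ) : ℂ) ^ (1 - s) - 1) Filter.atTop (nhds (0 - 1)) := by
      refine Filter.Tendsto.sub_const ?_ 1
      rw [tendsto_zero_iff_norm_tendsto_zero]
      have : ∀ N : ℕ, ‖((N + 1 : ℝ) : ℂ) ^ (1 - s)‖ = ((N + 1 : ℕ) : ℝ) ^ (-(s.re - 1)) := by
        intro N
        rw [norm_cpow_eq_rpow_re_of_pos (by positivity)]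
        simp
      simp_rw [this]
      exact (Filter.tendsto_add_atTop_iff_nat 1).mpr ((tendsto_rpow_neg_atTop (by linarith)).comp tendsto_natCast_atTop_atTop)
    have := tendsto_nhds_unique ht ht2
    rw [zero_sub] at this
    rw [← this]; exact hT.hasSum
  have h3 := (h1.mul_left (s-1)).add h2
  have h4 : HasSum (fun n => zTerm n s) ((s-1) * riemannZeta s + -1) := by
    refine h3.congr_fun ?_ |> id
    intro n; simp only [zTerm]; ring
  rw [h4.tsum_eq, riemannZeta_eq_inv_sub_mul hs1]
  have : s - 1 ≠ 0 := sub_ne_zero.mpr hs1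
  field_simp
  ring

lemma zTerm_tsum' {s : ℂ} (hs : 1 / 4 < s.re) : 1 + ∑' n, zTerm n s = riemannZeta₁ s := by
  set B := ‖s‖ + 3
  set U : Set ℂ := {z | 1/4 < z.re} ∩ ball 0 B with hU
  have hUo : IsOpen U := (isOpen_lt continuous_const continuous_re).inter isOpen_ball
  have hUc : Convex ℝ U := (convex_halfSpace_re_gt _).inter (convex_ball _ _)
  have hB : 3 ≤ B := by simp [B]
  have hd : DifferentiableOn ℂ (fun w => 1 + ∑' n, zTerm n w) U := by
    refine DifferentiableOn.const_add _ ?_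
    refine differentiableOn_tsum_of_summable_norm (zTerm_summable_bound.mul_left ((B+1)*B)) ?_ hUo ?_
    · intro n
      have h1 : ((n + 1 : ℝ) : ℂ) ≠ 0 := by exact_mod_cast (by positivity : (n + 1 : ℝ) ≠ 0)
      have h2 : ((n + 2 : ℝ) : ℂ) ≠ 0 := by exact_mod_cast (by positivity : (n + 2 : ℝ) ≠ 0)
      unfold zTerm
      intro w _
      apply DifferentiableAt.differentiableWithinAt
      refine ((DifferentiableAt.mul (by fun_prop) ?_).add ?_).sub ?_
      · exact DifferentiableAt.const_cpow (by fun_prop) (Or.inl h1)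
      · exact DifferentiableAt.const_cpow (by fun_prop) (Or.inl h2)
      · exact DifferentiableAt.const_cpow (by fun_prop) (Or.inl h1)
    · intro n w hw
      refine (zTerm_bound n hw.1).trans ?_
      have hw2 : ‖w‖ < B := mem_ball_zero_iff.mp hw.2
      have : ‖w - 1‖ ≤ B + 1 := (norm_sub_le _ _).trans (by simp; linarith)
      gcongr
  have h2 : (2:ℂ) ∈ U := ⟨by simp; norm_num, by simp; linarith⟩
  have := AnalyticOnNhd.eqOn_of_preconnected_of_eventuallyEq (hd.analyticOnNhd hUo)
    (differentiable_riemannZeta₁.differentiableOn.analyticOnNhd hUo) hUc.isPreconnected h2 ?_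
  · exact this ⟨hs, by simp [B]⟩
  · have : {z : ℂ | 1 < z.re} ∈ nhds (2:ℂ) := (isOpen_lt continuous_const continuous_re).mem_nhds (by simp)
    filter_upwards [this] with z hz
    exact zTerm_tsum hz

lemma zeta₁_growth : ∃ A : ℝ, 0 < A ∧ ∀ s : ℂ, 1 / 4 < s.re → ‖riemannZeta₁ s‖ ≤ 1 + A * (‖s - 1‖ * ‖s‖) := by
  refine ⟨(∑' n : ℕ, ((n : ℝ) + 1) ^ (-(5 / 4) : ℝ)) + 1, ?_, ?_⟩
  · have : 0 ≤ ∑' n : ℕ, ((n : ℝ) + 1) ^ (-(5 / 4) : ℝ) := tsum_nonneg (fun n => by positivity)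
    linarith
  · intro s hs
    rw [← zTerm_tsum' hs]
    refine (norm_add_le _ _).trans ?_
    rw [norm_one]
    have h1 := tsum_of_norm_bounded ((zTerm_summable_bound).hasSum.mul_left (‖s - 1‖ * ‖s‖)) (fun n => zTerm_bound n hs)
    have : 0 ≤ ‖s - 1‖ * ‖s‖ := by positivity
    linarith

end

section
open Complex Metric

lemma logDeriv_bound_of_ne_zero {f : ℂ → ℂ} {c : ℂ} {r M : ℝ} (hr : 0 < r) (hM : 0 < M)
    (hf : DifferentiableOn ℂ f (ball c r)) (hne : ∀ z ∈ ball c r, f z ≠ 0)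
    (hb : ∀ z ∈ ball c r, ‖f z‖ ≤ Real.exp M * ‖f c‖) {z : ℂ} (hz : ‖z - c‖ ≤ r / 2) :
    ‖deriv f z / f z‖ ≤ 24 * M / r := by
  have hc : c ∈ ball c r := mem_ball_self hr
  have hfd : ∀ w ∈ ball c r, HasDerivAt f (deriv f w) w := fun w hw =>
    (hf.differentiableAt (isOpen_ball.mem_nhds hw)).hasDerivAt
  have hq : DifferentiableOn ℂ (fun w => deriv f w / f w) (ball c r) :=
    (hf.deriv isOpen_ball).div hf hne
  obtain ⟨g, hgc, hg⟩ := hq.isExactOn_ball.with_val_at c 0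
  have hconst : ∀ w ∈ ball c r, f w * exp (-g w) = f c := by
    have hd : ∀ w ∈ ball c r, HasDerivAt (fun w => f w * exp (-g w)) 0 w := by
      intro w hw
      have := (hfd w hw).mul ((hg w hw).neg.cexp)
      convert! this using 1
      field_simp [hne w hw]
      ring
    intro w hw
    have h1 := (convex_ball c r).is_const_of_fderivWithin_eq_zero (𝕜 := ℂ)
      (f := fun w => f w * exp (-g w))
      (fun w hw => (hd w hw).differentiableAt.differentiableWithinAt) ?_ hw hc
    · simpa [hgc] using h1
    · intro w hw
      rw [fderivWithin_of_isOpen isOpen_ball hw]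
      ext
      simp [(hd w hw).deriv]
  have hre : ∀ w ∈ ball c r, (g w).re ≤ M := by
    intro w hw
    have h1 := congrArg norm (hconst w hw)
    rw [norm_mul, Complex.norm_exp] at h1
    have h2 := hb w hw
    have h3 : 0 < ‖f w‖ := norm_pos_iff.mpr (hne w hw)
    rw [← h1] at h2
    have h4 : 1 ≤ Real.exp M * Real.exp ((-g w).re) := by
      by_contra hcon
      push Not at hcon
      nlinarith
    rw [← Real.exp_add] at h4
    have := Real.one_le_exp_iff.mp h4
    simp at this
    linarith
  have hbc : ∀ w : ℂ, ‖w - c‖ ≤ 3 * r / 4 → ‖g w‖ ≤ 6 * M := by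
    intro w hw
    have h := Complex.borelCaratheodory_zero (f := fun u => g (u + c)) (R := r) (z := w - c) hM ?_ ?_ hr ?_ (by simp [hgc])
    · simp only [sub_add_cancel] at h
      refine h.trans ?_
      rw [div_le_iff₀ (by linarith)]
      nlinarith
    · intro u hu
      have hu' : u + c ∈ ball c r := by simpa using hu
      exact ((hg _ hu').comp_add_const u c).differentiableAt.differentiableWithinAt
    · intro u hu
      have hu' : u + c ∈ ball c r := by simpa using hu
      exact hre _ hu'
    · simp; linarith
  have hzb : z ∈ ball c r := by rw [mem_ball, dist_eq_norm]; linarith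
  have hsub : ∀ w ∈ closedBall z (r/4), ‖w - c‖ ≤ 3 * r / 4 := by
    intro w hw
    rw [mem_closedBall, dist_eq_norm] at hw
    have : w - c = (w - z) + (z - c) := by ring
    rw [this]
    refine (norm_add_le _ _).trans ?_
    linarith
  have := Complex.norm_deriv_le_of_forall_mem_sphere_norm_le (f := g) (c := z) (R := r/4) (C := 6*M) (by linarith) ?_ ?_
  · rw [(hg z hzb).deriv] at this
    refine this.trans (le_of_eq ?_)
    field_simp
    ring
  · apply DifferentiableOn.diffContOnCl
    rw [closure_ball _ (by linarith)]
    intro w hw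
    have hw' : w ∈ ball c r := by
      rw [mem_ball, dist_eq_norm]; linarith [hsub w hw]
    exact (hg w hw').differentiableAt.differentiableWithinAt
  · intro w hw
    exact hbc w (hsub w (sphere_subset_closedBall hw))

/-- dividing out a zero -/
lemma divide_zero {f : ℂ → ℂ} (hf : Differentiable ℂ f) {R M : ℝ} (hR : 0 < R) {ρ : ℂ}
    (hρ : f ρ = 0) (hρR : ‖ρ‖ ≤ R / 4) (hf0 : f 0 ≠ 0)
    (hb : ∀ z : ℂ, ‖z‖ ≤ R → ‖f z‖ ≤ Real.exp M * ‖f 0‖) :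
    ∃ g : ℂ → ℂ, Differentiable ℂ g ∧ (∀ z, f z = (z - ρ) * g z) ∧
      (∀ z : ℂ, ‖z‖ ≤ R → ‖g z‖ ≤ Real.exp (M - 1) * ‖g 0‖) ∧
      deriv f 0 / f 0 = deriv g 0 / g 0 - 1 / ρ := by
  have hfg : ∀ z, f z = (z - ρ) * dslope f ρ z := by
    intro z
    have := sub_smul_dslope f ρ z
    rw [hρ, sub_zero, smul_eq_mul] at this
    exact this.symm
  have hd : Differentiable ℂ (dslope f ρ) := by
    have := (Complex.differentiableOn_dslope (s := Set.univ) (c := ρ) (f := f) Filter.univ_mem).mpr hf.differentiableOn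
    exact differentiableOn_univ.mp this
  have hρ0 : ρ ≠ 0 := by rintro rfl; exact hf0 hρ
  set g := dslope f ρ with hgdef
  have hg0 : g 0 ≠ 0 := by
    intro h; apply hf0; rw [hfg 0, h, mul_zero]
  refine ⟨g, hd, hfg, ?_, ?_⟩
  · have hsph : ∀ z ∈ frontier (ball (0:ℂ) R), ‖g z‖ ≤ Real.exp (M - 1) * ‖g 0‖ := by
      intro z hz
      rw [frontier_ball _ hR.ne', mem_sphere_zero_iff_norm] at hz
      have h1 := hb z hz.le
      rw [hfg z, hfg 0, norm_mul, norm_mul, zero_sub, norm_neg] at h1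
      have h2 : 3 * R / 4 ≤ ‖z - ρ‖ := by
        have := norm_sub_norm_le z ρ
        linarith
      have h3 : 3 * R / 4 * ‖g z‖ ≤ Real.exp M * (R / 4 * ‖g 0‖) := by
        calc _ ≤ ‖z - ρ‖ * ‖g z‖ := by gcongr
          _ ≤ _ := h1
          _ ≤ _ := by gcongr
      have h4 : Real.exp M = Real.exp (M-1) * Real.exp 1 := by rw [← Real.exp_add]; ring_nf
      have h5 : Real.exp 1 ≤ 3 := by linarith [Real.exp_one_lt_d9]
      rw [h4] at h3
      have h6 : R * ‖g z‖ ≤ R * (Real.exp (M-1) * ‖g 0‖) := by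
        have : Real.exp (M-1) * Real.exp 1 * (R/4 * ‖g 0‖) ≤ Real.exp (M-1) * 3 * (R/4 * ‖g 0‖) := by gcongr
        linarith
      exact le_of_mul_le_mul_left h6 hR
    intro z hz
    have := Complex.norm_le_of_forall_mem_frontier_norm_le (U := ball (0:ℂ) R) isBounded_ball hd.diffContOnCl hsph (z := z)
      (by rw [closure_ball _ hR.ne']; simpa using hz)
    exact this
  · have h1 : HasDerivAt f (1 * g 0 + (0 - ρ) * deriv g 0) 0 := by
      have := ((hasDerivAt_id (0:ℂ)).sub_const ρ).mul (hd 0).hasDerivAt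
      have e : f = (id - fun _ => ρ) * g := by ext z; simp [hfg z]
      rw [e]; exact this
    rw [h1.deriv, hfg 0]
    field_simp
    ring

lemma re_logDeriv_lower {R : ℝ} (hR : 0 < R) (n : ℕ) : ∀ (f : ℂ → ℂ) (M : ℝ), Differentiable ℂ f →
    M < n → f 0 ≠ 0 → (∀ z : ℂ, ‖z‖ ≤ R → ‖f z‖ ≤ Real.exp M * ‖f 0‖) →
    (∀ z : ℂ, ‖z‖ ≤ R / 4 → f z = 0 → z.re ≤ 0) →
    -(96 * (M + 1) / R) ≤ (deriv f 0 / f 0).re := by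
  induction n with
  | zero =>
    intro f M hf hM hf0 hb _
    exfalso
    have := hb 0 (by simpa using hR.le)
    have h2 : 0 < ‖f 0‖ := norm_pos_iff.mpr hf0
    have h3 : Real.exp M < 1 := Real.exp_lt_one_iff.mpr (by simpa using hM)
    nlinarith
  | succ n ih =>
    intro f M hf hM hf0 hb hz
    have hM0 : 0 ≤ M := by
      have := hb 0 (by simpa using hR.le)
      have h2 : 0 < ‖f 0‖ := norm_pos_iff.mpr hf0
      by_contra hcon
      have h3 : Real.exp M < 1 := Real.exp_lt_one_iff.mpr (by linarith)
      nlinarith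
    by_cases hex : ∃ ρ : ℂ, ‖ρ‖ ≤ R / 4 ∧ f ρ = 0
    · obtain ⟨ρ, hρR, hρ⟩ := hex
      obtain ⟨g, hg, hfg, hgb, hder⟩ := divide_zero hf hR hρ hρR hf0 hb
      have hg0 : g 0 ≠ 0 := by
        intro h; apply hf0; rw [hfg 0, h, mul_zero]
      have := ih g (M-1) hg (by push_cast at hM; linarith) hg0 hgb
        (fun z h1 h2 => hz z h1 (by rw [hfg, h2, mul_zero]))
      rw [hder, sub_re]
      have h1 : (1 / ρ).re ≤ 0 := by
        rw [one_div, inv_re]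
        exact div_nonpos_of_nonpos_of_nonneg (hz ρ hρR hρ) (normSq_nonneg _)
      have h2 : 96 * (M - 1 + 1) / R ≤ 96 * (M + 1) / R := by gcongr; linarith
      linarith
    · push Not at hex
      have := logDeriv_bound_of_ne_zero (f := f) (c := 0) (r := R/4) (M := M+1) (z := 0) (by linarith) (by linarith)
        hf.differentiableOn (fun z hz => hex z (by simpa using (mem_ball_zero_iff.mp hz).le)) ?_ (by simp; linarith)
      · have h1 := Complex.abs_re_le_norm (deriv f 0 / f 0)
        have h2 : 24 * (M+1) / (R/4) = 96 * (M+1) / R := by field_simp; ring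
        rw [h2] at this
        linarith [neg_abs_le (deriv f 0 / f 0).re]
      · intro z hz
        have hz' := (mem_ball_zero_iff.mp hz).le
        refine (hb z (by linarith)).trans ?_
        gcongr
        linarith

lemma re_logDeriv_lower_zero {R M δ : ℝ} (hR : 0 < R) {f : ℂ → ℂ} (hf : Differentiable ℂ f)
    (hf0 : f 0 ≠ 0) (hb : ∀ z : ℂ, ‖z‖ ≤ R → ‖f z‖ ≤ Real.exp M * ‖f 0‖)
    (hz : ∀ z : ℂ, ‖z‖ ≤ R / 4 → f z = 0 → z.re ≤ 0) (hδ : 0 < δ) (hδR : δ ≤ R / 4)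
    (h0 : f (-δ : ℂ) = 0) :
    1 / δ - 96 * (M + 1) / R ≤ (deriv f 0 / f 0).re := by
  obtain ⟨g, hg, hfg, hgb, hder⟩ := divide_zero hf hR h0 (by simpa [abs_of_pos hδ] using hδR) hf0 hb
  have hg0 : g 0 ≠ 0 := by
    intro h; apply hf0; rw [hfg 0, h, mul_zero]
  obtain ⟨n, hn⟩ := exists_nat_gt (M-1)
  have := re_logDeriv_lower hR n g (M-1) hg hn hg0 hgb
        (fun z h1 h2 => hz z h1 (by rw [hfg, h2, mul_zero]))
  rw [hder, sub_re]
  have h1 : (1 / (-δ : ℂ)).re = -(1/δ) := by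
    rw [← ofReal_neg, ← ofReal_one, ← ofReal_div, ofReal_re]; ring
  have h2 : 96 * (M - 1 + 1) / R ≤ 96 * (M + 1) / R := by gcongr; linarith
  linarith

end

section
open Complex Metric

/-- `log (|t| + 3)` -/
noncomputable def LL (t : ℝ) : ℝ := Real.log (|t| + 3)

lemma one_le_LL (t : ℝ) : 1 ≤ LL t := by
  rw [LL, Real.le_log_iff_exp_le (by positivity)]
  linarith [Real.exp_one_lt_d9, abs_nonneg t]

lemma LL_le_two_mul {t u : ℝ} (h : |u| ≤ 2 * |t| + 1) : LL u ≤ 2 * LL t := by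
  have : 2 * LL t = Real.log ((|t|+3)^2) := by rw [Real.log_pow, LL]; norm_num
  rw [this, LL]
  apply Real.log_le_log (by positivity)
  nlinarith [abs_nonneg t]

lemma zeta₁_eq {s : ℂ} (hs : s ≠ 1) : riemannZeta₁ s = (s - 1) * riemannZeta s := by
  rw [riemannZeta_eq_inv_sub_mul hs]
  have : s - 1 ≠ 0 := sub_ne_zero.mpr hs
  field_simp

lemma zeta₁_ne_zero_of_one_le_re {s : ℂ} (hs : 1 ≤ s.re) : riemannZeta₁ s ≠ 0 := by
  by_cases h : s = 1
  · rw [h]; simp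
  · rw [zeta₁_eq h]
    exact mul_ne_zero (sub_ne_zero.mpr h) (riemannZeta_ne_zero_of_one_le_re hs)

lemma zeta₁_upper : ∃ A : ℝ, 0 < A ∧ ∀ s : ℂ, 1 / 4 < s.re → s.re ≤ 4 →
    ‖riemannZeta₁ s‖ ≤ Real.exp (A * LL s.im) := by
  obtain ⟨A, hA, h⟩ := zeta₁_growth
  refine ⟨Real.log (1 + A) + 4, ?_, ?_⟩
  · have := Real.log_nonneg (by linarith : (1:ℝ) ≤ 1 + A)
    linarith
  intro s h1 h2
  have hn : ‖s‖ ≤ |s.im| + 4 := (norm_le_abs_re_add_abs_im s).trans (by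
    rw [abs_of_pos (by linarith)]; linarith)
  have hn1 : ‖s - 1‖ ≤ |s.im| + 4 := (norm_le_abs_re_add_abs_im _).trans (by
    simp only [sub_re, one_re, sub_im, one_im, sub_zero]
    have : |s.re - 1| ≤ 4 := abs_le.mpr ⟨by linarith, by linarith⟩
    linarith)
  have h0 := abs_nonneg s.im
  have h3 : ‖riemannZeta₁ s‖ ≤ (1 + A) * (|s.im| + 3) ^ 4 := by
    refine (h s h1).trans ?_
    have e1 : ‖s - 1‖ * ‖s‖ ≤ (|s.im| + 4) * (|s.im| + 4) := by gcongr
    have e2 : |s.im| + 4 ≤ (|s.im| + 3)^2 := by nlinarith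
    have e3 : (|s.im| + 4) * (|s.im| + 4) ≤ (|s.im| + 3)^2 * (|s.im| + 3)^2 := by gcongr
    have e4 : (1:ℝ) ≤ (|s.im| + 3)^2 * (|s.im| + 3)^2 := by nlinarith
    have e5 : A * (‖s - 1‖ * ‖s‖) ≤ A * ((|s.im| + 3)^2 * (|s.im| + 3)^2) :=
      mul_le_mul_of_nonneg_left (e1.trans e3) hA.le
    nlinarith
  refine h3.trans ?_
  have h4 : (1 + A) * (|s.im| + 3) ^ 4 = Real.exp (Real.log (1+A) + 4 * LL s.im) := by
    rw [Real.exp_add, Real.exp_log (by linarith), LL]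
    congr 1
    rw [show (4:ℝ) * Real.log (|s.im| + 3) = Real.log ((|s.im|+3)^4) by rw [Real.log_pow]; norm_num]
    rw [Real.exp_log (by positivity)]
  rw [h4]
  apply Real.exp_le_exp.mpr
  have := Real.log_nonneg (by linarith : (1:ℝ) ≤ 1 + A)
  nlinarith [one_le_LL s.im]

lemma norm_inv_zeta_le {s : ℂ} (hs : 1 < s.re) : 1 ≤ ‖riemannZeta s‖ * ‖riemannZeta (s.re : ℂ)‖ := by
  have hμ := ArithmeticFunction.LSeries_zeta_mul_Lseries_moebius hs
  rw [ArithmeticFunction.LSeries_zeta_eq_riemannZeta hs] at hμ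
  have h1 := congrArg norm hμ
  rw [norm_mul, norm_one] at h1
  rw [← h1]
  gcongr
  have hsum : Summable (fun n : ℕ => 1 / (n:ℝ) ^ s.re) := Real.summable_one_div_nat_rpow.mpr hs
  have hz : riemannZeta (s.re : ℂ) = ((∑' n : ℕ, 1 / (n:ℝ) ^ s.re : ℝ) : ℂ) := by
    rw [zeta_eq_tsum_one_div_nat_cpow (by simpa using hs), ofReal_tsum]
    congr 1; ext n
    rw [ofReal_div, ofReal_one, ofReal_cpow (by positivity)]; simp
  rw [hz, norm_real, Real.norm_of_nonneg (tsum_nonneg fun n => by positivity)]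
  refine tsum_of_norm_bounded hsum.hasSum ?_
  intro n
  rcases Nat.eq_zero_or_pos n with rfl | hn
  · simp
    positivity
  · rw [LSeries.term_of_ne_zero hn.ne', norm_div, norm_natCast_cpow_of_pos hn]
    gcongr
    have : |ArithmeticFunction.moebius n| ≤ 1 := ArithmeticFunction.abs_moebius_le_one
    rw [norm_intCast]
    exact_mod_cast this

lemma zeta₁_lower : ∃ C : ℝ, 1 ≤ C ∧ ∀ η t : ℝ, 0 < η → η ≤ 1 →
    η ^ 2 ≤ C * ‖riemannZeta₁ (1 + η + t * I)‖ := by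
  obtain ⟨A, hA, h⟩ := zeta₁_upper
  refine ⟨Real.exp (A * LL 0), ?_, ?_⟩
  · exact Real.one_le_exp (mul_nonneg hA.le (by linarith [one_le_LL 0]))
  intro η t h0 h1
  set s : ℂ := 1 + η + t * I with hs
  have hre : s.re = 1 + η := by simp [hs]
  have e1 := norm_inv_zeta_le (s := s) (by rw [hre]; linarith)
  rw [hre] at e1
  have ne1 : s ≠ 1 := by intro hh; rw [hh] at hre; simp at hre; linarith
  have ne2 : ((1 + η : ℝ) : ℂ) ≠ 1 := by
    intro hh; have := congrArg re hh; simp at this; linarith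
  have e2 := h ((1+η : ℝ) : ℂ) (by simp; linarith) (by simp; linarith)
  rw [ofReal_im, zeta₁_eq ne2, norm_mul] at e2
  have e3 : ‖((1+η : ℝ) : ℂ) - 1‖ = η := by
    rw [show ((1+η : ℝ) : ℂ) - 1 = (η : ℂ) by push_cast; ring, norm_real, Real.norm_of_nonneg h0.le]
  rw [e3] at e2
  have e4 : η ≤ ‖s - 1‖ := by
    have := abs_re_le_norm (s - 1)
    rw [sub_re, hre] at this
    simp [abs_of_pos h0] at this
    exact this
  rw [zeta₁_eq ne1, norm_mul]
  set Zs := ‖riemannZeta s‖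
  set Zr := ‖riemannZeta ((1+η : ℝ) : ℂ)‖
  calc η ^ 2 ≤ η ^ 2 * (Zs * Zr) := by nlinarith
    _ = (η * Zr) * (η * Zs) := by ring
    _ ≤ Real.exp (A * LL 0) * (‖s - 1‖ * Zs) := by gcongr

/-- growth in a disc relative to the centre -/
lemma zeta₁_disc : ∃ A : ℝ, 0 < A ∧ ∀ η t : ℝ, 0 < η → η ≤ 1 → ∀ z : ℂ, ‖z‖ ≤ 1 / 2 →
    ‖riemannZeta₁ (1 + η + t * I + z)‖ ≤
      Real.exp (A * (LL t + Real.log (1 / η))) * ‖riemannZeta₁ (1 + η + t * I)‖ := by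
  obtain ⟨A, hA, h⟩ := zeta₁_upper
  obtain ⟨C, hC, hl⟩ := zeta₁_lower
  refine ⟨2 * A + Real.log C + 2, ?_, ?_⟩
  · have := Real.log_nonneg hC; linarith
  intro η t h0 h1 z hz
  have hzr := (abs_re_le_norm z).trans hz
  have hzi := (abs_im_le_norm z).trans hz
  have hzr' := abs_le.mp hzr
  have e1 := h (1 + η + t * I + z) (by simp; linarith) (by simp; linarith)
  have e2 : LL (1 + η + t * I + z).im ≤ 2 * LL t := by
    apply LL_le_two_mul
    simp only [add_im, one_im, ofReal_im, mul_im, ofReal_re, I_im, I_re]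
    have : |0 + 0 + (t * 1 + 0 * 0) + z.im| ≤ |t| + |z.im| := by
      rw [show 0 + 0 + (t * 1 + 0 * 0) + z.im = t + z.im by ring]; exact abs_add_le _ _
    linarith [abs_nonneg t]
  have e3 : ‖riemannZeta₁ (1 + η + t * I + z)‖ ≤ Real.exp (2 * A * LL t) := by
    refine e1.trans (Real.exp_le_exp.mpr ?_)
    nlinarith
  have e4 := hl η t h0 h1
  have hl1 := one_le_LL t
  have hlog : 0 ≤ Real.log (1 / η) := Real.log_nonneg (by rw [le_div_iff₀ h0]; linarith)
  have e5 : 1 ≤ Real.exp (Real.log C + 2 * Real.log (1/η)) * ‖riemannZeta₁ (1 + η + t * I)‖ := by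
    rw [Real.exp_add, Real.exp_log (by linarith), show 2 * Real.log (1/η) = Real.log ((1/η)^2) by rw [Real.log_pow]; norm_num, Real.exp_log (by positivity)]
    rw [show C * (1/η)^2 * ‖riemannZeta₁ (1 + η + t * I)‖ = (C * ‖riemannZeta₁ (1 + η + t * I)‖) / η^2 by field_simp]
    rw [le_div_iff₀ (by positivity)]; linarith
  calc _ ≤ Real.exp (2 * A * LL t) := e3
    _ ≤ Real.exp (2 * A * LL t) * (Real.exp (Real.log C + 2 * Real.log (1/η)) * ‖riemannZeta₁ (1 + η + t * I)‖) :=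
      le_mul_of_one_le_right (Real.exp_pos _).le e5
    _ = Real.exp (2 * A * LL t + (Real.log C + 2 * Real.log (1/η))) * ‖riemannZeta₁ (1 + η + t * I)‖ := by
      rw [Real.exp_add (2 * A * LL t)]; exact (mul_assoc _ _ _).symm
    _ ≤ _ := by
      gcongr
      have := Real.log_nonneg hC
      nlinarith [mul_nonneg hA.le hlog, mul_nonneg this hlog, mul_nonneg this (by linarith : 0 ≤ LL t - 1)]

lemma zeta₁_re_lower : ∃ A : ℝ, 0 < A ∧ ∀ η t : ℝ, 0 < η → η ≤ 1 →
    (-(A * (LL t + Real.log (1 / η))) ≤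
      (deriv riemannZeta₁ (1 + η + t * I) / riemannZeta₁ (1 + η + t * I)).re) ∧
    ∀ β : ℝ, β < 1 + η → 1 + η - β ≤ 1 / 8 → riemannZeta₁ (β + t * I) = 0 →
      1 / (1 + η - β) - A * (LL t + Real.log (1 / η)) ≤
      (deriv riemannZeta₁ (1 + η + t * I) / riemannZeta₁ (1 + η + t * I)).re := by
  obtain ⟨A, hA, h⟩ := zeta₁_disc
  refine ⟨192 * (A + 1), by linarith, ?_⟩
  intro η t h0 h1
  set s : ℂ := 1 + η + t * I with hs
  set M := A * (LL t + Real.log (1/η)) with hM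
  have hl1 := one_le_LL t
  have hlog : 0 ≤ Real.log (1 / η) := Real.log_nonneg (by rw [le_div_iff₀ h0]; linarith)
  set f : ℂ → ℂ := fun z => riemannZeta₁ (s + z) with hf
  have hfd : Differentiable ℂ f := by
    rw [hf]; exact differentiable_riemannZeta₁.comp (differentiable_id.const_add s)
  have hder : deriv f 0 = deriv riemannZeta₁ s := by
    rw [hf, deriv_comp_const_add]; simp
  have hf0 : f 0 = riemannZeta₁ s := by simp [hf]
  have hre : s.re = 1 + η := by simp [hs]
  have hne : f 0 ≠ 0 := by rw [hf0]; exact zeta₁_ne_zero_of_one_le_re (by rw [hre]; linarith)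
  have hb : ∀ z : ℂ, ‖z‖ ≤ 1/2 → ‖f z‖ ≤ Real.exp M * ‖f 0‖ := by
    intro z hz; rw [hf0]; exact h η t h0 h1 z hz
  have hz : ∀ z : ℂ, ‖z‖ ≤ 1/2 / 4 → f z = 0 → z.re ≤ 0 := by
    intro z _ hz
    by_contra hcon
    exact zeta₁_ne_zero_of_one_le_re (s := s + z) (by rw [add_re, hre]; linarith) hz
  have hle : 96 * (M + 1) / (1/2) ≤ 192 * (A + 1) * (LL t + Real.log (1 / η)) := by
    rw [hM]; nlinarith
  rw [← hder, ← hf0]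
  constructor
  · obtain ⟨n, hn⟩ := exists_nat_gt M
    have := re_logDeriv_lower (R := 1/2) (by norm_num) n f M hfd hn hne hb hz
    linarith
  · intro β hβ hβ2 hzero
    have := re_logDeriv_lower_zero (R := 1/2) (M := M) (δ := 1 + η - β) (by norm_num) hfd hne hb hz (by linarith) (by linarith) ?_
    · linarith
    · simp only [hf, hs]
      rw [← hzero]
      congr 1
      push_cast
      ring

end

section
open Complex Metric

/-- log derivative of `(s-1)ζ(s)` -/
noncomputable def ZD (s : ℂ) : ℂ := deriv riemannZeta₁ s / riemannZeta₁ s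

/-- Dirichlet series of the von Mangoldt function -/
noncomputable def LV (s : ℂ) : ℂ := LSeries (fun n => (ArithmeticFunction.vonMangoldt n : ℂ)) s

lemma LV_eq {s : ℂ} (hs : 1 < s.re) : LV s = 1 / (s - 1) - ZD s := by
  have ne1 : s ≠ 1 := by rintro rfl; simp at hs
  have h1 : LV s = - deriv riemannZeta s / riemannZeta s :=
    ArithmeticFunction.LSeries_vonMangoldt_eq_deriv_riemannZeta_div hs
  have hd := (differentiableAt_riemannZeta ne1).hasDerivAt
  have h2 : HasDerivAt riemannZeta₁ (1 * riemannZeta s + (s - 1) * deriv riemannZeta s) s := by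
    have := ((hasDerivAt_id s).sub_const 1).mul hd
    refine this.congr_of_eventuallyEq ?_
    filter_upwards [isOpen_ne.mem_nhds ne1] with z hz
    exact zeta₁_eq hz
  have hz : riemannZeta s ≠ 0 := riemannZeta_ne_zero_of_one_le_re hs.le
  have hs1 : s - 1 ≠ 0 := sub_ne_zero.mpr ne1
  rw [h1, ZD, h2.deriv, zeta₁_eq ne1]
  field_simp
  ring

lemma LV_term (σ t : ℝ) (n : ℕ) :
    LSeries.term (fun n => (ArithmeticFunction.vonMangoldt n : ℂ)) (σ + t * I) n =
    ((ArithmeticFunction.vonMangoldt n * (n:ℝ) ^ (-σ) : ℝ) : ℂ) * (n : ℂ) ^ (-(t * I)) := by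
  rcases Nat.eq_zero_or_pos n with rfl | hn
  · simp
  · have h0 : (n:ℂ) ≠ 0 := by exact_mod_cast hn.ne'
    rw [LSeries.term_of_ne_zero hn.ne', div_eq_mul_inv, ← cpow_neg, neg_add, cpow_add _ _ h0,
      ofReal_mul, ofReal_cpow (by positivity), ofReal_neg, ofReal_natCast, mul_assoc]

lemma LV_summable {σ : ℝ} (hσ : 1 < σ) (t : ℝ) : 
    HasSum (fun n : ℕ => ((ArithmeticFunction.vonMangoldt n * (n:ℝ) ^ (-σ) : ℝ) : ℂ) * (n : ℂ) ^ (-(t * I)))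
      (LV (σ + t * I)) := by
  have := (ArithmeticFunction.LSeriesSummable_vonMangoldt (s := σ + t * I) (by simpa using hσ)).LSeriesHasSum
  rw [LSeriesHasSum] at this
  convert! this using 1
  ext n
  exact (LV_term σ t n).symm

lemma norm_cpow_I {n : ℕ} (hn : 0 < n) (t : ℝ) : ‖(n : ℂ) ^ (-(t * I))‖ = 1 := by
  rw [norm_natCast_cpow_of_pos hn]; simp

lemma three_four_one {σ : ℝ} (hσ : 1 < σ) (t : ℝ) :
    0 ≤ 3 * (LV σ).re + 4 * (LV (σ + t * I)).re + (LV (σ + (2 * t : ℝ) * I)).re := by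
  have h0 := hasSum_re (LV_summable hσ 0)
  have h1 := hasSum_re (LV_summable hσ t)
  have h2 := hasSum_re (LV_summable hσ (2 * t))
  simp only [ofReal_zero, zero_mul, add_zero] at h0
  have h := ((h0.mul_left 3).add (h1.mul_left 4)).add h2
  refine h.nonneg ?_
  intro n
  rcases Nat.eq_zero_or_pos n with rfl | hn
  · simp
  simp only [re_ofReal_mul, neg_zero, cpow_zero, mul_one, ofReal_re]
  have hw : (n : ℂ) ^ (-((2 * t : ℝ) * I)) = ((n : ℂ) ^ (-(t * I)))^2 := by
    rw [← cpow_nat_mul]; congr 1; push_cast; ring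
  rw [hw]
  have hn1 := norm_cpow_I hn t
  set w := (n : ℂ) ^ (-(t * I))
  have hc : 0 ≤ ArithmeticFunction.vonMangoldt n * (n:ℝ) ^ (-σ) := 
    mul_nonneg ArithmeticFunction.vonMangoldt_nonneg (by positivity)
  set c := ArithmeticFunction.vonMangoldt n * (n:ℝ) ^ (-σ)
  have hsq : w.re ^ 2 + w.im ^ 2 = 1 := by
    have := Complex.sq_norm w
    rw [hn1, normSq_apply] at this; nlinarith
  have : (w^2).re = w.re^2 - w.im^2 := by rw [sq, mul_re]; ring
  rw [this]
  have : 0 ≤ c * (2 * (1 + w.re)^2) := by positivity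
  calc (0:ℝ) ≤ c * (2 * (1 + w.re)^2) := this
    _ = _ := by rw [show w.im^2 = 1 - w.re^2 by linarith]; ring

lemma LV_norm_le {σ : ℝ} (hσ : 1 < σ) (t : ℝ) : ‖LV (σ + t * I)‖ ≤ ‖LV σ‖ := by
  have h0 := hasSum_re (LV_summable hσ 0)
  simp only [ofReal_zero, zero_mul, add_zero, neg_zero, cpow_zero, mul_one, ofReal_re] at h0
  refine le_trans ?_ (re_le_norm _)
  rw [← (LV_summable hσ t).tsum_eq]
  refine tsum_of_norm_bounded h0 ?_
  intro n
  rcases Nat.eq_zero_or_pos n with rfl | hn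
  · simp
  rw [norm_mul, norm_cpow_I hn, mul_one, norm_real, Real.norm_of_nonneg]
  exact mul_nonneg ArithmeticFunction.vonMangoldt_nonneg (by positivity)

lemma zero_ineq : ∃ A : ℝ, 1 ≤ A ∧ ∀ η t β : ℝ, 0 < η → η ≤ 1 → 1 ≤ |t| → β ≤ 1 →
    1 + η - β ≤ 1 / 8 → riemannZeta₁ (β + t * I) = 0 →
    4 / (1 + η - β) ≤ 3 / η + A * (LL t + Real.log (1 / η)) := by
  obtain ⟨A, hA, h⟩ := zeta₁_re_lower
  refine ⟨9 * A + 5, by linarith, ?_⟩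
  intro η t β h0 h1 ht hβ hδ hz
  have hσ : 1 < 1 + η := by linarith
  have h341 := three_four_one hσ t
  have hlog : 0 ≤ Real.log (1 / η) := Real.log_nonneg (by rw [le_div_iff₀ h0]; linarith)
  rw [LV_eq (by simpa using h0), LV_eq (by simpa using h0), LV_eq (by simpa using h0)] at h341
  have a0 := (h η 0 h0 h1).1
  have a1 := (h η t h0 h1).2 β (by linarith) hδ hz
  have a2 := (h η (2 * t) h0 h1).1
  simp only [ofReal_zero, zero_mul, add_zero] at a0
  have L0 : LL 0 ≤ LL t := by
    unfold LL; apply Real.log_le_log <;> simp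
  have L2 : LL (2 * t) ≤ 2 * LL t := LL_le_two_mul (by rw [abs_mul, abs_two]; linarith)
  have hl := one_le_LL t
  have ht2 : 1 ≤ t ^ 2 := by nlinarith [sq_abs t, abs_nonneg t]
  have r0 : (1 / (((1 + η : ℝ) : ℂ) - 1)).re = 1 / η := by
    rw [show ((1 + η : ℝ) : ℂ) - 1 = (η : ℂ) by push_cast; ring, ← ofReal_one, ← ofReal_div, ofReal_re]
  have rt : ∀ u : ℝ, 1 ≤ u^2 → (1 / (((1 + η : ℝ) : ℂ) + u * I - 1)).re ≤ 1 := by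
    intro u hu
    rw [show ((1 + η : ℝ) : ℂ) + u * I - 1 = η + u * I by push_cast; ring]
    rw [one_div, inv_re, normSq_apply]
    simp
    rw [div_le_one (by nlinarith)]
    nlinarith
  have r1 := rt t ht2
  have r2 := rt (2 * t) (by nlinarith)
  unfold ZD at h341
  simp only [sub_re, r0] at h341 r1 r2
  simp only [ofReal_add, ofReal_one] at h341 r1 r2 a0 a1 a2
  have e1 : 4 / (1 + η - β) = 4 * (1 / (1 + η - β)) := by ring
  have e2 : 3 / η = 3 * (1 / η) := by ring
  rw [e1, e2]
  have m0 : A * LL 0 ≤ A * LL t := by gcongr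
  have m2 : A * LL (2 * t) ≤ A * (2 * LL t) := by gcongr
  have m3 := mul_nonneg hA.le hlog
  nlinarith

lemma zero_free_large : ∃ b : ℝ, 0 < b ∧ ∀ t β : ℝ, 1 ≤ |t| → 
    riemannZeta₁ (β + t * I) = 0 → β ≤ 1 - b / LL t := by
  obtain ⟨A, hA, h⟩ := zero_ineq
  set s : ℝ := 1 / (16 * A) with hs
  have hs0 : 0 < s := by positivity
  have hs1 : s ≤ 1 / 16 := by rw [hs]; gcongr; linarith
  have hAs : A = 1 / (16 * s) := by rw [hs]; field_simp
  refine ⟨3 / 13 * s^2, by positivity, ?_⟩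
  intro t β ht hz
  have hl := one_le_LL t
  set L := LL t
  have hβ : β ≤ 1 := by
    by_contra hcon
    exact zeta₁_ne_zero_of_one_le_re (s := β + t * I) (by simp; linarith) hz
  set η := s^2 / L with hη
  have hη0 : 0 < η := by positivity
  have hηs : η ≤ s^2 := by rw [hη]; exact div_le_self (by positivity) hl
  have hη1 : η ≤ 1/256 := by nlinarith
  have e0 : 3 / 13 * s^2 / L = 3/13 * η := by rw [hη]; ring
  rw [e0]
  by_cases hδ : 1 + η - β ≤ 1 / 8
  · have h1 := h η t β hη0 (by linarith) ht hβ hδ hz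
    have hlog : Real.log (1/η) ≤ 2 * L / s := by
      have q : 0 < Real.sqrt (1/η) := by positivity
      have : Real.log (1/η) = 2 * Real.log (Real.sqrt (1/η)) := by
        rw [Real.log_sqrt (by positivity)]; ring
      rw [this]
      have h2 := Real.log_le_self q.le
      have h3 : Real.sqrt (1/η) ≤ L / s := by
        apply Real.sqrt_le_iff.mpr ⟨by positivity, ?_⟩
        rw [hη, div_pow L s 2, one_div_div]
        rw [div_le_div_iff_of_pos_right (by positivity)]; nlinarith
      calc _ ≤ 2 * (L / s) := by linarith
        _ = _ := by ring
    have hδ0 : 0 < 1 + η - β := by linarith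
    have h2 : A * (L + Real.log (1/η)) ≤ 1 / 4 * (1 / η) := by
      calc A * (L + Real.log (1/η)) ≤ A * (L / s + 2 * L / s) := by
            gcongr
            rw [le_div_iff₀ hs0]; nlinarith
        _ = 3 / 16 * (L / s^2) := by rw [hAs]; field_simp; ring
        _ ≤ 1 / 4 * (L / s^2) := mul_le_mul_of_nonneg_right (by norm_num) (by positivity)
        _ = _ := by rw [hη, one_div_div]
    have h3 : 4 / (1 + η - β) ≤ 13 / 4 / η := by
      calc _ ≤ 3 / η + 1 / 4 * (1/η) := by linarith
        _ = _ := by ring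
    rw [div_le_div_iff₀ hδ0 hη0] at h3
    linarith
  · push Not at hδ
    linarith

lemma zero_free_small : ∃ b : ℝ, 0 < b ∧ ∀ s : ℂ, |s.im| ≤ 1 → 1 - b < s.re → riemannZeta₁ s ≠ 0 := by
  set K : Set ℂ := (fun t : ℝ => (1:ℂ) + t * I) '' Set.Icc (-1) 1
  have hK : IsCompact K := isCompact_Icc.image (by fun_prop)
  have hU : IsOpen {s : ℂ | riemannZeta₁ s ≠ 0} := 
    isOpen_ne_fun differentiable_riemannZeta₁.continuous continuous_const
  obtain ⟨δ, hδ, hsub⟩ := hK.exists_thickening_subset_open hU (by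
    rintro _ ⟨t, _, rfl⟩
    exact zeta₁_ne_zero_of_one_le_re (by simp))
  refine ⟨δ, hδ, ?_⟩
  intro s hs1 hs2
  by_cases h : 1 ≤ s.re
  · exact zeta₁_ne_zero_of_one_le_re h
  · push Not at h
    refine hsub (mem_thickening_iff.mpr ⟨1 + s.im * I, ⟨s.im, abs_le.mp hs1, rfl⟩, ?_⟩)
    have : s - (1 + s.im * I) = ((s.re - 1 : ℝ) : ℂ) := by
      apply Complex.ext <;> simp
    rw [dist_eq_norm, this, norm_real, Real.norm_eq_abs, abs_lt]
    constructor <;> linarith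

lemma zero_free : ∃ b : ℝ, 0 < b ∧ b ≤ 1 / 4 ∧ ∀ s : ℂ, 1 - b / LL s.im < s.re → riemannZeta₁ s ≠ 0 := by
  obtain ⟨b1, h1, H1⟩ := zero_free_large
  obtain ⟨b2, h2, H2⟩ := zero_free_small
  refine ⟨min (1/4) (min b1 b2), by positivity, min_le_left _ _, ?_⟩
  intro s hs hz
  have hl := one_le_LL s.im
  have hb1 : min (1/4) (min b1 b2) ≤ b1 := (min_le_right _ _).trans (min_le_left _ _)
  have hb2 : min (1/4) (min b1 b2) ≤ b2 := (min_le_right _ _).trans (min_le_right _ _)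
  have hb0 : 0 < min (1/4) (min b1 b2) := by positivity
  set b := min (1/4) (min b1 b2)
  by_cases h : |s.im| ≤ 1
  · refine H2 s h ?_ hz
    have : b / LL s.im ≤ b := div_le_self hb0.le hl
    linarith
  · push Not at h
    have := H1 s.im s.re h.le (by rw [re_add_im]; exact hz)
    have : b / LL s.im ≤ b1 / LL s.im := by gcongr
    linarith

end

section
open Complex Metric

lemma LL_mono {t u : ℝ} (h : |t| ≤ |u|) : LL t ≤ LL u := by
  unfold LL; apply Real.log_le_log (by positivity); linarith

lemma ZD_bound_strip : ∃ b C : ℝ, 0 < b ∧ b ≤ 1 / 64 ∧ 0 < C ∧ ∀ σ t : ℝ, |σ - 1| ≤ b / LL t →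
    riemannZeta₁ (σ + t * I) ≠ 0 ∧ ‖ZD (σ + t * I)‖ ≤ C * LL t ^ 2 := by
  obtain ⟨b0, hb0, hb1, hzf⟩ := zero_free
  obtain ⟨A, hA, hdisc⟩ := zeta₁_disc
  have hlb : 0 ≤ Real.log (16 / b0) := Real.log_nonneg (by rw [le_div_iff₀ hb0]; linarith)
  refine ⟨b0 / 16, 96 / b0 * (A * (2 + Real.log (16 / b0))), by positivity, by linarith, by positivity, ?_⟩
  intro σ t hσ
  have hl := one_le_LL t
  set L := LL t with hL
  set η := b0 / (16 * L) with hη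
  have hη0 : 0 < η := by positivity
  have hbL : b0 / L ≤ b0 := div_le_self hb0.le hl
  have hηL : η = b0 / L / 16 := by rw [hη]; field_simp
  have hσL : |σ - 1| ≤ b0 / L / 16 := by
    refine hσ.trans (le_of_eq ?_); field_simp
  have hbL0 : 0 < b0 / L := by positivity
  set q := b0 / L with hq
  set r := q / 4 with hr
  set c : ℂ := 1 + η + t * I with hc
  have hcre : c.re = 1 + η := by simp [hc]
  have hcim : c.im = t := by simp [hc]
  have hne : ∀ z ∈ ball c r, riemannZeta₁ z ≠ 0 := by
    intro z hz
    rw [mem_ball, dist_eq_norm] at hz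
    have h1 := (abs_re_le_norm (z - c)).trans_lt hz
    have h2 := (abs_im_le_norm (z - c)).trans_lt hz
    rw [sub_re, hcre, abs_lt] at h1
    rw [sub_im, hcim] at h2
    have h3 : LL z.im ≤ 2 * LL t := by
      apply LL_le_two_mul
      have : |z.im| ≤ |t| + |z.im - t| := by
        calc |z.im| = |t + (z.im - t)| := by ring_nf
          _ ≤ _ := abs_add_le _ _
      linarith [abs_nonneg t]
    apply hzf
    have h4 : q / 2 ≤ b0 / LL z.im := by
      rw [hq, div_div, mul_comm L 2]
      have := one_le_LL z.im
      exact div_le_div_of_nonneg_left hb0.le (by linarith) h3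
    linarith [h1.1]
  have hM : A * (L + Real.log (1 / η)) ≤ A * (2 + Real.log (16 / b0)) * L := by
    have : Real.log (1/η) ≤ Real.log (16 / b0) * L + L := by
      have e : 1 / η = 16 / b0 * L := by rw [hη]; field_simp
      rw [e, Real.log_mul (by positivity) (by positivity)]
      have := Real.log_le_self (by linarith : 0 ≤ L)
      nlinarith
    calc _ ≤ A * (L + (Real.log (16 / b0) * L + L)) := by gcongr
      _ = _ := by ring
  have hM0 : 0 < A * (2 + Real.log (16 / b0)) * L := by positivity
  have hη1 : η ≤ 1 := by linarith
  have hr1 : r ≤ 1 / 2 := by linarith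
  have hmem : ‖((σ:ℂ) + t * I) - c‖ ≤ r / 2 := by
    rw [show ((σ:ℂ) + t * I) - c = ((σ - 1 - η : ℝ) : ℂ) by rw [hc]; push_cast; ring, norm_real,
      Real.norm_eq_abs]
    rw [abs_le] at hσL ⊢
    constructor <;> linarith
  have hmem' : (σ:ℂ) + t * I ∈ ball c r := by
    rw [mem_ball, dist_eq_norm]; linarith
  refine ⟨hne _ hmem', ?_⟩
  have key := logDeriv_bound_of_ne_zero (f := riemannZeta₁) (c := c) (r := r) (by positivity) hM0
    differentiable_riemannZeta₁.differentiableOn hne ?_ hmem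
  · refine key.trans (le_of_eq ?_)
    rw [hr, hq]; field_simp; ring
  · intro z hz
    rw [mem_ball, dist_eq_norm] at hz
    have := hdisc η t hη0 hη1 (z - c) (by linarith)
    rw [← hc, add_sub_cancel] at this
    refine this.trans ?_
    gcongr

lemma ZD_bounds : ∃ b C : ℝ, 0 < b ∧ b ≤ 1 / 64 ∧ 0 < C ∧ ∀ T : ℝ,
    (∀ σ t : ℝ, |t| ≤ |T| → |σ - 1| ≤ b / LL T →
      riemannZeta₁ (σ + t * I) ≠ 0 ∧ ‖ZD (σ + t * I)‖ ≤ C * LL T ^ 2) ∧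
    ∀ t : ℝ, ‖ZD ((1 + b / LL T : ℝ) + t * I)‖ ≤ C * LL T ^ 2 := by
  obtain ⟨b, C, hb0, hb1, hC, h⟩ := ZD_bound_strip
  refine ⟨b, C + 2 / b, hb0, hb1, by positivity, ?_⟩
  intro T
  have hT := one_le_LL T
  have hle : C ≤ C + 2 / b := by have : 0 < 2 / b := by positivity
                                 linarith
  have main : ∀ σ t : ℝ, |t| ≤ |T| → |σ - 1| ≤ b / LL T →
      riemannZeta₁ (σ + t * I) ≠ 0 ∧ ‖ZD (σ + t * I)‖ ≤ C * LL T ^ 2 := by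
    intro σ t ht hσ
    have h1 := LL_mono ht
    have h2 := one_le_LL t
    have := h σ t (hσ.trans (by gcongr))
    refine ⟨this.1, this.2.trans ?_⟩
    gcongr
  constructor
  · intro σ t ht hσ
    refine ⟨(main σ t ht hσ).1, (main σ t ht hσ).2.trans ?_⟩
    gcongr
  · intro t
    set σ := 1 + b / LL T with hσ
    have hq : 0 < b / LL T := by positivity
    have hσ1 : 1 < σ := by linarith
    have e1 := LV_norm_le hσ1 t
    rw [LV_eq (by simpa using hσ1), LV_eq (by simpa using hσ1)] at e1
    have e2 := (main σ 0 (by simp) (by rw [hσ]; simp [abs_of_pos hq])).2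
    simp only [ofReal_zero, zero_mul, add_zero] at e2
    have e3 : ∀ u : ℝ, ‖(1:ℂ) / ((σ:ℂ) + u * I - 1)‖ ≤ LL T / b := by
      intro u
      rw [norm_div, norm_one, show LL T / b = 1 / (b / LL T) by rw [one_div_div]]
      gcongr
      have := abs_re_le_norm ((σ:ℂ) + u * I - 1)
      simp [hσ, abs_of_pos hq] at this
      simpa [hσ] using this
    have e4 := e3 0
    simp only [ofReal_zero, zero_mul, add_zero] at e4
    have e5 : ‖ZD (σ + t * I)‖ ≤ ‖(1:ℂ) / ((σ:ℂ) + t * I - 1)‖ + ‖1 / ((σ:ℂ) + t * I - 1) - ZD (σ + t * I)‖ := by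
      have := norm_sub_le ((1:ℂ) / ((σ:ℂ) + t * I - 1)) (1 / ((σ:ℂ) + t * I - 1) - ZD (σ + t * I))
      rwa [sub_sub_cancel] at this
    have e6 := norm_sub_le ((1:ℂ) / ((σ:ℂ) - 1)) (ZD σ)
    have e7 := e3 t
    have e8 : LL T / b ≤ LL T ^ 2 / b := by gcongr; nlinarith
    calc _ ≤ LL T / b + (LL T / b + C * LL T ^ 2) := by linarith
      _ ≤ LL T ^ 2 / b + (LL T ^ 2 / b + C * LL T ^ 2) := by linarith
      _ = _ := by ring

end

section
open Complex Metric MeasureTheory Set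

/-- Perron kernel -/
noncomputable def KK (x : ℝ) (s : ℂ) : ℂ := (x:ℂ) ^ s / (s * (s + 1))

lemma norm_KK_le {x : ℝ} (hx : 0 < x) {s : ℂ} (hs : 1 / 2 ≤ s.re) :
    ‖KK x s‖ ≤ 4 * x ^ s.re * (1 + s.im ^ 2)⁻¹ := by
  rw [KK, norm_div, norm_cpow_eq_rpow_re_of_pos hx, norm_mul]
  have hp : 0 < x ^ s.re := Real.rpow_pos_of_pos hx _
  have h1 : (1 + s.im^2) / 4 ≤ ‖s‖ ^ 2 := by
    rw [Complex.sq_norm, normSq_apply]; nlinarith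
  have h2 : ‖s‖ ^ 2 ≤ ‖s + 1‖ ^ 2 := by
    rw [Complex.sq_norm, Complex.sq_norm, normSq_apply, normSq_apply]; simp; nlinarith
  have h3 : ‖s‖ ≤ ‖s + 1‖ := by
    exact (sq_le_sq₀ (norm_nonneg _) (norm_nonneg _)).mp h2
  have h4 : (1 + s.im^2) / 4 ≤ ‖s‖ * ‖s + 1‖ := by
    refine h1.trans ?_
    rw [sq]; gcongr
  calc _ ≤ x ^ s.re / ((1 + s.im^2) / 4) := by gcongr
    _ = _ := by field_simp

lemma continuous_KK {x : ℝ} (hx : 0 < x) {σ : ℝ} (hσ : 0 < σ) :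
    Continuous fun t : ℝ => KK x (σ + t * I) := by
  unfold KK
  refine Continuous.div ?_ (by fun_prop) ?_
  · exact Continuous.const_cpow (by fun_prop) (Or.inl (by exact_mod_cast hx.ne'))
  · intro t h
    rcases mul_eq_zero.mp h with h | h
    · have := congrArg re h; simp at this; linarith
    · have := congrArg re h; simp at this; linarith

lemma integrable_KK {x : ℝ} (hx : 0 < x) {σ : ℝ} (hσ : 1 / 2 ≤ σ) :
    Integrable fun t : ℝ => KK x (σ + t * I) := by
  refine (integrable_inv_one_add_sq.const_mul (4 * x ^ σ)).mono'
    (continuous_KK hx (by linarith)).aestronglyMeasurable (Filter.Eventually.of_forall fun t => ?_)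
  simpa using norm_KK_le hx (s := σ + t * I) (by simpa using hσ)

lemma inv_cpow_neg' {y : ℝ} (hy : 0 < y) (s : ℂ) : (((y⁻¹ : ℝ)) : ℂ) ^ (-s) = (y:ℂ) ^ s := by
  rw [ofReal_inv, cpow_neg, inv_cpow, inv_inv]
  rw [arg_ofReal_of_nonneg hy.le]; exact Real.pi_pos.ne

lemma perron_one {σ y : ℝ} (hσ : 1 / 2 ≤ σ) (hy : 0 < y) :
    ∫ t : ℝ, KK y (σ + t * I) = ((2 * Real.pi * max (1 - y⁻¹) 0 : ℝ) : ℂ) := by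
  set f : ℝ → ℂ := fun u => (Ioc (0:ℝ) 1).indicator (fun _ => (1:ℂ)) u - (Ioc (0:ℝ) 1).indicator (fun t : ℝ => (t:ℂ) ^ (1:ℂ)) u with hf
  have hm : ∀ s : ℂ, 0 < s.re → HasMellin f s (1 / s - 1 / (s + 1)) := by
    intro s hs
    have h1 := hasMellin_one_Ioc hs
    have h2 := hasMellin_cpow_Ioc 1 (s := s) (by simp; linarith)
    have := hasMellin_sub h1.1 h2.1
    rwa [h1.2, h2.2] at this
  have hm' : ∀ s : ℂ, 0 < s.re → mellin f s = 1 / (s * (s + 1)) := by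
    intro s hs
    rw [(hm s hs).2]
    have e1 : s ≠ 0 := by rintro rfl; simp at hs
    have e2 : s + 1 ≠ 0 := by intro h; have := congrArg re h; simp at this; linarith
    field_simp; ring
  have hfe : ∀ u : ℝ, 0 < u → f u = ((max (1 - u) 0 : ℝ) : ℂ) := by
    intro u hu
    simp only [hf, indicator, mem_Ioc, hu, true_and, cpow_one]
    split_ifs with h
    · rw [max_eq_left (by linarith)]; push_cast; ring
    · rw [max_eq_right (by linarith)]; simp
  have hline : ∀ t : ℝ, 0 < ((σ:ℂ) + t * I).re := by intro t; simp; linarith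
  have hv : VerticalIntegrable (mellin f) σ := by
    have := integrable_KK (x := 1) one_pos hσ
    unfold VerticalIntegrable
    refine this.congr (Filter.Eventually.of_forall fun t => ?_)
    simp only [hm' _ (hline t), KK]; simp
  have hc : ContinuousAt f y⁻¹ := by
    have : ContinuousAt (fun u : ℝ => ((max (1 - u) 0 : ℝ) : ℂ)) y⁻¹ := by fun_prop
    refine this.congr ?_
    filter_upwards [isOpen_Ioi.mem_nhds (show y⁻¹ ∈ Ioi 0 from inv_pos.mpr hy)] with u hu
    exact (hfe u hu).symm
  have key := mellinInv_mellin_eq σ f (inv_pos.mpr hy) (hm σ (by simp; linarith)).1 hv hc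
  rw [hfe _ (inv_pos.mpr hy), mellinInv] at key
  have e : ∀ t : ℝ, (((y⁻¹ : ℝ)) : ℂ) ^ (-((σ:ℂ) + t * I)) • mellin f (σ + t * I) = KK y (σ + t * I) := by
    intro t
    rw [inv_cpow_neg' hy, hm' _ (hline t), KK, smul_eq_mul, mul_one_div]
  simp only [e] at key
  rw [ofReal_mul, ← key, real_smul, ← mul_assoc, ← ofReal_mul, mul_one_div_cancel (by positivity), ofReal_one, one_mul]

lemma inv_line_continuous {σ : ℝ} (hσ : 1 < σ) : Continuous fun t : ℝ => 1 / ((σ:ℂ) + t * I - 1) := by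
  refine continuous_const.div (by fun_prop) ?_
  intro t h; have := congrArg re h; simp at this; linarith

lemma inv_line_bound {σ : ℝ} (hσ : 1 < σ) : ∀ t : ℝ, ‖1 / ((σ:ℂ) + t * I - 1)‖ ≤ 1 / (σ - 1) := by
  intro t
  rw [norm_div, norm_one]
  have := re_le_norm ((σ:ℂ) + t * I - 1)
  simp at this
  have h0 : 0 < σ - 1 := by linarith
  gcongr
  linarith

lemma perron_main {σ y : ℝ} (hσ : 1 < σ) (hy : 1 ≤ y) :
    ∫ t : ℝ, 1 / ((σ:ℂ) + t * I - 1) * KK y (σ + t * I) = ((2 * Real.pi * (y / 2 - 1 + 1 / (2 * y)) : ℝ) : ℂ) := by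
  have hy0 : 0 < y := by linarith
  set f : ℝ → ℂ := fun u => (1/2 : ℂ) • (Ioc (0:ℝ) 1).indicator (fun t : ℝ => (t:ℂ) ^ (-1:ℂ)) u -
    (Ioc (0:ℝ) 1).indicator (fun _ => (1:ℂ)) u + (1/2 : ℂ) • (Ioc (0:ℝ) 1).indicator (fun t : ℝ => (t:ℂ) ^ (1:ℂ)) u with hf
  have hm : ∀ s : ℂ, 1 < s.re → HasMellin f s ((1/2:ℂ) • (1 / (s + (-1))) - 1 / s + (1/2:ℂ) • (1 / (s + 1))) := by
    intro s hs
    have h1 := hasMellin_one_Ioc (s := s) (by linarith)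
    have h2 := hasMellin_cpow_Ioc 1 (s := s) (by simp; linarith)
    have h3 := hasMellin_cpow_Ioc (-1) (s := s) (by simp; linarith)
    have h2' := hasMellin_const_smul h2.1 (1/2:ℂ)
    have h3' := hasMellin_const_smul h3.1 (1/2:ℂ)
    have h4 := hasMellin_sub h3'.1 h1.1
    have h5 := hasMellin_add h4.1 h2'.1
    rwa [h4.2, h3'.2, h2'.2, h1.2, h2.2, h3.2] at h5
  have hm' : ∀ s : ℂ, 1 < s.re → mellin f s = 1 / ((s - 1) * (s * (s + 1))) := by
    intro s hs
    rw [(hm s hs).2]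
    have e1 : s ≠ 0 := by rintro rfl; simp at hs; linarith
    have e2 : s + 1 ≠ 0 := by intro h; have := congrArg re h; simp at this; linarith
    have e3 : s + (-1) ≠ 0 := by intro h; have := congrArg re h; simp at this; linarith
    have e4 : s - 1 ≠ 0 := e3
    simp only [smul_eq_mul]
    rw [← sub_eq_add_neg]
    field_simp; ring
  have hfe : ∀ u : ℝ, 0 < u → f u = (((max (1 - u) 0) ^ 2 / (2 * u) : ℝ) : ℂ) := by
    intro u hu
    have hu' : (u:ℂ) ≠ 0 := by exact_mod_cast hu.ne'
    simp only [hf, indicator, mem_Ioc, hu, true_and, cpow_one, cpow_neg_one, smul_eq_mul]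
    split_ifs with h
    · rw [max_eq_left (by linarith)]; push_cast; field_simp; ring
    · rw [max_eq_right (by linarith)]; simp
  have hline : ∀ t : ℝ, 1 < ((σ:ℂ) + t * I).re := by intro t; simp; linarith
  have hcont := inv_line_continuous hσ
  have hbd := inv_line_bound hσ
  have hv : VerticalIntegrable (mellin f) σ := by
    have := (integrable_KK (x := 1) one_pos (by linarith : 1/2 ≤ σ)).bdd_mul hcont.aestronglyMeasurable (Filter.Eventually.of_forall hbd)
    unfold VerticalIntegrable
    refine this.congr (Filter.Eventually.of_forall fun t => ?_)
    simp only [hm' _ (hline t), KK]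
    rw [ofReal_one, one_cpow]
    simp only [div_eq_mul_inv, mul_inv]; ring
  have hc : ContinuousAt f y⁻¹ := by
    have : ContinuousAt (fun u : ℝ => (((max (1 - u) 0) ^ 2 / (2 * u) : ℝ) : ℂ)) y⁻¹ := by
      have : (2 * y⁻¹) ≠ 0 := by positivity
      have h2 : ContinuousAt (fun u : ℝ => (max (1 - u) 0) ^ 2 / (2 * u)) y⁻¹ :=
        ContinuousAt.div (by fun_prop) (by fun_prop) this
      exact continuous_ofReal.continuousAt.comp h2
    refine this.congr ?_
    filter_upwards [isOpen_Ioi.mem_nhds (show y⁻¹ ∈ Ioi 0 from inv_pos.mpr hy0)] with u hu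
    exact (hfe u hu).symm
  have key := mellinInv_mellin_eq σ f (inv_pos.mpr hy0) (hm σ (by simpa using hσ)).1 hv hc
  rw [hfe _ (inv_pos.mpr hy0), mellinInv] at key
  have e : ∀ t : ℝ, (((y⁻¹ : ℝ)) : ℂ) ^ (-((σ:ℂ) + t * I)) • mellin f (σ + t * I) = 1 / ((σ:ℂ) + t * I - 1) * KK y (σ + t * I) := by
    intro t
    rw [inv_cpow_neg' hy0, hm' _ (hline t), KK, smul_eq_mul]
    simp only [div_eq_mul_inv, mul_inv]; ring
  simp only [e] at key
  have e2 : (max (1 - y⁻¹) 0) ^ 2 / (2 * y⁻¹) = y / 2 - 1 + 1 / (2 * y) := by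
    rw [max_eq_left (by have := inv_le_one_of_one_le₀ hy; linarith)]
    field_simp; ring
  rw [e2] at key
  rw [ofReal_mul, ← key, real_smul, ← mul_assoc, ← ofReal_mul, mul_one_div_cancel (by positivity), ofReal_one, one_mul]

end

section
open Complex Metric MeasureTheory Set

/-- smoothed Chebyshev function -/
noncomputable def psi1 (x : ℝ) : ℝ :=
  ∑ n ∈ Finset.range (⌊x⌋₊ + 1), ArithmeticFunction.vonMangoldt n * (x - n)

lemma LV_perron {σ x : ℝ} (hσ : 1 < σ) (hx : 0 < x) :
    ∫ t : ℝ, LV (σ + t * I) * KK x (σ + t * I) = ((2 * Real.pi * (psi1 x / x) : ℝ) : ℂ) := by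
  set F : ℕ → ℝ → ℂ := fun n t =>
    ((ArithmeticFunction.vonMangoldt n * (n:ℝ) ^ (-σ) : ℝ) : ℂ) * (n : ℂ) ^ (-(t * I)) * KK x (σ + t * I) with hF
  have hsum : ∀ t : ℝ, ∑' n, F n t = LV (σ + t * I) * KK x (σ + t * I) := by
    intro t
    exact ((LV_summable hσ t).mul_right _).tsum_eq
  have hFe : ∀ n t, F n t = (ArithmeticFunction.vonMangoldt n : ℂ) * KK (x / n) (σ + t * I) := by
    intro n t
    rcases Nat.eq_zero_or_pos n with rfl | hn
    · simp [hF]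
    simp only [hF]
    rw [← LV_term, LSeries.term_of_ne_zero hn.ne', KK, KK, ofReal_div, ofReal_natCast]
    rw [show ((x:ℂ) / (n:ℂ)) ^ ((σ:ℂ) + t * I) = (x:ℂ) ^ ((σ:ℂ) + t * I) / (n:ℂ) ^ ((σ:ℂ) + t * I) by
      have := Complex.div_cpow_ofReal_nonneg hx.le (Nat.cast_nonneg n) ((σ:ℂ) + t * I)
      simpa using this]
    ring
  have hFi : ∀ n, Integrable (F n) := by
    intro n
    rcases Nat.eq_zero_or_pos n with rfl | hn
    · have : F 0 = fun _ => 0 := by ext t; simp [hF]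
      rw [this]; exact integrable_zero _ _ _
    have : F n = fun t : ℝ => (ArithmeticFunction.vonMangoldt n : ℂ) * KK (x / n) (σ + t * I) := by
      ext t; exact hFe n t
    rw [this]
    exact (integrable_KK (by positivity) (by linarith)).const_mul _
  have hFn : ∀ n t, ‖F n t‖ = (ArithmeticFunction.vonMangoldt n * (n:ℝ) ^ (-σ)) * ‖KK x (σ + t * I)‖ := by
    intro n t
    rcases Nat.eq_zero_or_pos n with rfl | hn
    · simp [hF]
    simp only [hF]
    rw [norm_mul, norm_mul, norm_cpow_I hn, mul_one, norm_real, Real.norm_of_nonneg]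
    exact mul_nonneg ArithmeticFunction.vonMangoldt_nonneg (by positivity)
  have hS : Summable fun n => ∫ t, ‖F n t‖ := by
    simp only [hFn, integral_const_mul]
    have h0 := hasSum_re (LV_summable hσ 0)
    simp only [ofReal_zero, zero_mul, add_zero, neg_zero, cpow_zero, mul_one, ofReal_re] at h0
    exact h0.summable.mul_right _
  have key := hasSum_integral_of_summable_integral_norm hFi hS
  simp only [hsum] at key
  have hinteg : ∀ n, ∫ t, F n t = ((2 * Real.pi * (ArithmeticFunction.vonMangoldt n * max (1 - n / x) 0) : ℝ) : ℂ) := by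
    intro n
    rcases Nat.eq_zero_or_pos n with rfl | hn
    · simp [hF]
    simp only [hFe, integral_const_mul]
    rw [perron_one (by linarith) (by positivity), inv_div]
    push_cast; ring
  simp only [hinteg] at key
  rw [← key.tsum_eq, tsum_eq_sum (s := Finset.range (⌊x⌋₊ + 1))]
  · rw [← ofReal_sum, psi1, Finset.sum_div, Finset.mul_sum]
    congr 1
    refine Finset.sum_congr rfl fun n hn => ?_
    have hn' : (n:ℝ) ≤ x := by
      rw [Finset.mem_range, Nat.lt_succ_iff] at hn
      exact (Nat.le_floor_iff hx.le).mp hn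
    rw [max_eq_left (by rw [sub_nonneg, div_le_one hx]; exact hn')]
    field_simp
  · intro n hn
    have hn' : x < n := by
      rw [Finset.mem_range, not_lt] at hn
      exact (Nat.floor_lt hx.le).mp hn
    rw [max_eq_right (by rw [sub_nonpos, le_div_iff₀ hx]; linarith)]
    simp

lemma continuous_ZD_line {σ : ℝ} (hσ : ∀ t : ℝ, riemannZeta₁ (σ + t * I) ≠ 0) : Continuous fun t : ℝ => ZD (σ + t * I) := by
  unfold ZD
  have h1 : Continuous (deriv riemannZeta₁) :=
    (differentiable_riemannZeta₁.contDiff (n := 1)).continuous_deriv le_rfl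
  exact Continuous.div (h1.comp (by fun_prop)) (differentiable_riemannZeta₁.continuous.comp (by fun_prop)) hσ

lemma ZD_perron {σ x : ℝ} (hσ : 1 < σ) (hx : 1 ≤ x) :
    Integrable (fun t : ℝ => ZD (σ + t * I) * KK x (σ + t * I)) ∧
    ∫ t : ℝ, ZD (σ + t * I) * KK x (σ + t * I) =
      ((2 * Real.pi * (x / 2 - 1 + 1 / (2 * x) - psi1 x / x) : ℝ) : ℂ) := by
  have hx0 : 0 < x := by linarith
  have hK := integrable_KK hx0 (by linarith : 1/2 ≤ σ)
  have hi1 := hK.bdd_mul (inv_line_continuous hσ).aestronglyMeasurable (Filter.Eventually.of_forall (inv_line_bound hσ))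
  have hcz : Continuous fun t : ℝ => ZD (σ + t * I) := continuous_ZD_line fun t => 
    zeta₁_ne_zero_of_one_le_re (by simp; linarith)
  have hL : ∀ t : ℝ, LV (σ + t * I) = 1 / ((σ:ℂ) + t * I - 1) - ZD (σ + t * I) := fun t => LV_eq (by simpa using hσ)
  have hi2 : Integrable (fun t : ℝ => LV (σ + t * I) * KK x (σ + t * I)) := by
    refine hK.bdd_mul (c := ‖LV σ‖) ?_ (Filter.Eventually.of_forall (LV_norm_le hσ))
    simp only [hL]
    exact ((inv_line_continuous hσ).sub hcz).aestronglyMeasurable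
  have he : (fun t : ℝ => ZD (σ + t * I) * KK x (σ + t * I)) = fun t : ℝ => 
      1 / ((σ:ℂ) + t * I - 1) * KK x (σ + t * I) - LV (σ + t * I) * KK x (σ + t * I) := by
    ext t; rw [hL]; ring
  rw [he]
  refine ⟨hi1.sub hi2, ?_⟩
  rw [integral_sub hi1 hi2, perron_main hσ hx, LV_perron hσ hx0]
  push_cast; ring

end

section
open Complex Metric MeasureTheory Set

lemma contour_bound {x T δ M : ℝ} (hx : 1 ≤ x) (hT : 1 ≤ T) (hδ : 0 < δ) (hδ2 : δ ≤ 1 / 2) (hM : 0 ≤ M)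
    (h1 : ∀ σ t : ℝ, |t| ≤ T → |σ - 1| ≤ δ → riemannZeta₁ (σ + t * I) ≠ 0 ∧ ‖ZD (σ + t * I)‖ ≤ M)
    (h2 : ∀ t : ℝ, ‖ZD ((1 + δ : ℝ) + t * I)‖ ≤ M) :
    |x / 2 - 1 + 1 / (2 * x) - psi1 x / x| ≤ 4 * M * (x ^ (1 - δ) + x ^ (1 + δ) / T) := by
  have hx0 : 0 < x := by linarith
  obtain ⟨hinteg, heq⟩ := ZD_perron (σ := 1 + δ) (by linarith) hx
  set G : ℂ → ℂ := fun s => ZD s * KK x s with hG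
  have hGb : ∀ σ t : ℝ, 1/2 ≤ σ → ‖ZD (σ + t * I)‖ ≤ M → ‖G (σ + t * I)‖ ≤ 4 * M * x ^ σ * (1 + t^2)⁻¹ := by
    intro σ t hσ hz
    simp only [hG, norm_mul]
    have := norm_KK_le hx0 (s := σ + t * I) (by simpa using hσ)
    simp at this
    calc _ ≤ M * (4 * x ^ σ * (1 + t^2)⁻¹) := by gcongr
      _ = _ := by ring
  -- holomorphy
  have hdiff : DifferentiableOn ℂ G (uIcc (1 - δ) (1 + δ) ×ℂ uIcc (-T) T) := by
    intro s hs
    rw [mem_reProdIm, uIcc_of_le (by linarith), uIcc_of_le (by linarith)] at hs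
    have hz := (h1 s.re s.im (abs_le.mpr hs.2) (abs_le.mpr ⟨by linarith [hs.1.1], by linarith [hs.1.2]⟩)).1
    rw [re_add_im] at hz
    have hre : 0 < s.re := by linarith [hs.1.1]
    have hs0 : s ≠ 0 := by rintro rfl; simp at hre
    have hs1 : s + 1 ≠ 0 := by intro h; have := congrArg re h; simp at this; linarith
    have hxc : (x:ℂ) ≠ 0 := by exact_mod_cast hx0.ne'
    apply DifferentiableAt.differentiableWithinAt
    have d1 : DifferentiableAt ℂ (deriv riemannZeta₁) s := 
      (differentiable_riemannZeta₁.contDiff (n := 2)).differentiable_deriv_two s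
    have d2 : DifferentiableAt ℂ riemannZeta₁ s := differentiable_riemannZeta₁ s
    simp only [hG, ZD, KK]
    refine (d1.div d2 hz).mul (DifferentiableAt.div ?_ (by fun_prop) (mul_ne_zero hs0 hs1))
    exact differentiableAt_id.const_cpow (Or.inl hxc)
  have hrect := integral_boundary_rect_eq_zero_of_differentiableOn G ((1 - δ : ℝ) + (-T : ℝ) * I) ((1 + δ : ℝ) + (T : ℝ) * I)
    (by simpa using hdiff)
  have hr1 : ((1 - δ : ℝ) + (-T : ℝ) * I : ℂ).re = 1 - δ := by simp
  have hr2 : ((1 - δ : ℝ) + (-T : ℝ) * I : ℂ).im = -T := by simp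
  have hr3 : ((1 + δ : ℝ) + (T : ℝ) * I : ℂ).re = 1 + δ := by simp
  have hr4 : ((1 + δ : ℝ) + (T : ℝ) * I : ℂ).im = T := by simp
  rw [hr1, hr2, hr3, hr4] at hrect
  have hxδ : 0 < x ^ (1 + δ) := Real.rpow_pos_of_pos hx0 _
  have hxδ' : 0 < x ^ (1 - δ) := Real.rpow_pos_of_pos hx0 _
  -- horizontal
  have hhor : ∀ u : ℝ, |u| = T → ‖∫ s in (1 - δ)..(1 + δ), G ((s:ℂ) + (u:ℝ) * I)‖ ≤ 4 * M * x ^ (1 + δ) * (1 + T^2)⁻¹ := by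
    intro u hu
    have := intervalIntegral.norm_integral_le_of_norm_le_const (a := 1 - δ) (b := 1 + δ) 
      (f := fun s : ℝ => G ((s:ℂ) + (u:ℝ) * I)) (C := 4 * M * x ^ (1 + δ) * (1 + T^2)⁻¹) ?_
    · refine this.trans (mul_le_of_le_one_right (by positivity) ?_)
      rw [show 1 + δ - (1 - δ) = 2 * δ by ring, abs_of_pos (by linarith)]; linarith
    · intro s hs
      rw [uIoc_of_le (by linarith)] at hs
      have hz := (h1 s u hu.le (abs_le.mpr ⟨by linarith [hs.1], by linarith [hs.2]⟩)).2
      have := hGb s u (by linarith [hs.1]) hz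
      rw [show u^2 = T^2 by rw [← sq_abs, hu]] at this
      refine this.trans ?_
      have : x ^ s ≤ x ^ (1 + δ) := Real.rpow_le_rpow_of_exponent_le hx hs.2
      gcongr
  have hintv : ∫ t in (-T)..T, (1 + t^2)⁻¹ = 2 * Real.arctan T := by
    rw [integral_inv_one_add_sq, Real.arctan_neg]; ring
  have hvert : ‖∫ t in (-T)..T, G (((1 - δ : ℝ):ℂ) + t * I)‖ ≤ 4 * M * x ^ (1 - δ) * (2 * Real.arctan T) := by
    rw [← hintv, ← intervalIntegral.integral_const_mul]
    refine intervalIntegral.norm_integral_le_of_norm_le (by linarith) ?_ ?_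
    · refine Filter.Eventually.of_forall fun t ht => ?_
      exact hGb (1 - δ) t (by linarith) (h1 (1 - δ) t (abs_le.mpr ⟨ht.1.le, ht.2⟩) (by simp [abs_of_pos hδ])).2
    · exact (integrable_inv_one_add_sq.const_mul _).intervalIntegrable
  have hdecomp : ∫ t : ℝ, G (((1 + δ : ℝ):ℂ) + t * I) = (∫ t in (-T)..T, G (((1 + δ : ℝ):ℂ) + t * I)) + ∫ t in (Ioc (-T) T)ᶜ, G (((1 + δ : ℝ):ℂ) + t * I) := by
    rw [intervalIntegral.integral_of_le (by linarith)]
    exact (integral_add_compl measurableSet_Ioc hinteg).symm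
  have htail : ‖∫ t in (Ioc (-T) T)ᶜ, G (((1 + δ : ℝ):ℂ) + t * I)‖ ≤ 4 * M * x ^ (1 + δ) * (Real.pi - 2 * Real.arctan T) := by
    have e : ∫ t in (Ioc (-T) T)ᶜ, (1 + t^2)⁻¹ = Real.pi - 2 * Real.arctan T := by
      have := integral_add_compl (measurableSet_Ioc (a := -T) (b := T)) integrable_inv_one_add_sq
      rw [integral_univ_inv_one_add_sq, ← intervalIntegral.integral_of_le (by linarith), hintv] at this
      linarith
    rw [← e, ← integral_const_mul]
    refine norm_integral_le_of_norm_le (integrable_inv_one_add_sq.const_mul _).integrableOn ?_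
    exact Filter.Eventually.of_forall fun t => hGb (1 + δ) t (by linarith) (h2 t)
  have hat : Real.pi - 2 * Real.arctan T ≤ 2 / T := by
    have hT0 : 0 < T := by linarith
    have e1 := Real.arctan_inv_of_pos hT0
    have e2 : Real.arctan T⁻¹ ≤ T⁻¹ := by
      have := Real.le_tan (Real.arctan_nonneg.mpr (by positivity : 0 ≤ T⁻¹)) (Real.arctan_lt_pi_div_two _)
      rwa [Real.tan_arctan] at this
    rw [div_eq_mul_inv]; linarith
  have hat2 : Real.arctan T ≤ Real.pi / 2 := (Real.arctan_lt_pi_div_two T).le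
  -- combine
  have hI : ‖∫ t in (-T)..T, G (((1 + δ : ℝ):ℂ) + t * I)‖ ≤ 4 * M * x ^ (1 - δ) * (2 * Real.arctan T) + 2 * (4 * M * x ^ (1 + δ) * (1 + T^2)⁻¹) := by
    set V1 := ∫ t in (-T)..T, G (((1 + δ : ℝ):ℂ) + t * I)
    set V0 := ∫ t in (-T)..T, G (((1 - δ : ℝ):ℂ) + t * I)
    have a1 := hhor (-T) (by rw [abs_neg, abs_of_pos (by linarith)])
    have a2 := hhor T (abs_of_pos (by linarith))
    set H1 := ∫ s in (1 - δ)..(1 + δ), G ((s:ℂ) + (-T:ℝ) * I)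
    set H2 := ∫ s in (1 - δ)..(1 + δ), G ((s:ℂ) + (T:ℝ) * I)
    have e : I * V1 = I * V0 + (H2 - H1) := by
      simp only [smul_eq_mul] at hrect
      linear_combination hrect
    have e2 : ‖V1‖ = ‖I * V1‖ := by simp
    rw [e2, e]
    refine (norm_add_le _ _).trans ?_
    have e3 : ‖I * V0‖ = ‖V0‖ := by simp
    have e4 := norm_sub_le H2 H1
    linarith
  have hfin : 2 * Real.pi * |x / 2 - 1 + 1 / (2 * x) - psi1 x / x| ≤ 
      4 * M * x ^ (1 - δ) * (2 * Real.arctan T) + 2 * (4 * M * x ^ (1 + δ) * (1 + T^2)⁻¹) + 4 * M * x ^ (1 + δ) * (Real.pi - 2 * Real.arctan T) := by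
    have e := congrArg norm heq
    rw [norm_real, Real.norm_eq_abs, abs_mul, abs_of_pos (by positivity : 0 < 2 * Real.pi)] at e
    rw [← e]
    change ‖∫ t : ℝ, G (((1 + δ : ℝ):ℂ) + t * I)‖ ≤ _
    rw [hdecomp]
    refine (norm_add_le _ _).trans ?_
    linarith
  have hTi : (1 + T^2)⁻¹ ≤ 1 / T := by
    rw [inv_eq_one_div]
    apply one_div_le_one_div_of_le (by linarith); nlinarith
  have hpi := Real.pi_gt_three
  have hMx : 0 ≤ 4 * M * x ^ (1 - δ) := by positivity
  have hMx' : 0 ≤ 4 * M * x ^ (1 + δ) := by positivity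
  have f1 : 4 * M * x ^ (1 - δ) * (2 * Real.arctan T) ≤ 4 * M * x ^ (1 - δ) * (2 * Real.pi) := by
    gcongr; linarith
  have f2 : 4 * M * x ^ (1 + δ) * (1 + T^2)⁻¹ ≤ 4 * M * x ^ (1 + δ) * (1 / T) := by gcongr
  have f3 : 4 * M * x ^ (1 + δ) * (Real.pi - 2 * Real.arctan T) ≤ 4 * M * x ^ (1 + δ) * (2 / T) := by gcongr
  have f4 : 4 * M * x ^ (1 + δ) * (4 / T) ≤ 4 * M * x ^ (1 + δ) * (2 * Real.pi / T) := by gcongr; linarith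
  have f5 : 2 * Real.pi * |x / 2 - 1 + 1 / (2 * x) - psi1 x / x| ≤ 2 * Real.pi * (4 * M * (x ^ (1 - δ) + x ^ (1 + δ) / T)) := by
    calc _ ≤ 4 * M * x ^ (1 - δ) * (2 * Real.pi) + 2 * (4 * M * x ^ (1 + δ) * (1 / T)) + 4 * M * x ^ (1 + δ) * (2 / T) := by linarith
      _ = 4 * M * x ^ (1 - δ) * (2 * Real.pi) + 4 * M * x ^ (1 + δ) * (4 / T) := by ring
      _ ≤ 4 * M * x ^ (1 - δ) * (2 * Real.pi) + 4 * M * x ^ (1 + δ) * (2 * Real.pi / T) := by linarith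
      _ = _ := by ring
  exact le_of_mul_le_mul_left f5 (by positivity)

end

section
open MeasureTheory Set

/-- classical error factor -/
noncomputable def Er (c x : ℝ) : ℝ := Real.exp (-c * Real.sqrt (Real.log x))

lemma Er_pos (c x : ℝ) : 0 < Er c x := Real.exp_pos _

lemma Er_le_one {c : ℝ} (hc : 0 ≤ c) (x : ℝ) : Er c x ≤ 1 := by
  unfold Er; apply Real.exp_le_one_iff.mpr
  have := Real.sqrt_nonneg (Real.log x); nlinarith

lemma Er_anti_c {c d : ℝ} (h : c ≤ d) (x : ℝ) : Er d x ≤ Er c x := by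
  unfold Er; apply Real.exp_le_exp.mpr
  have := Real.sqrt_nonneg (Real.log x); nlinarith

lemma Er_anti {c x y : ℝ} (hc : 0 ≤ c) (hx : 0 < x) (h : x ≤ y) : Er c y ≤ Er c x := by
  unfold Er; apply Real.exp_le_exp.mpr
  have : Real.sqrt (Real.log x) ≤ Real.sqrt (Real.log y) := Real.sqrt_le_sqrt (Real.log_le_log hx h)
  nlinarith

lemma Er_mul (c d x : ℝ) : Er (c + d) x = Er c x * Er d x := by
  unfold Er; rw [← Real.exp_add]; congr 1; ring

lemma sq_mul_exp_le {c l : ℝ} (hc : 0 < c) (hl : 0 ≤ l) : l ^ 2 * Real.exp (-(2 * c) * l) ≤ 2 / c^2 * Real.exp (-c * l) := by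
  have h := Real.quadratic_le_exp_of_nonneg (by positivity : 0 ≤ c * l)
  have h1 : l^2 ≤ 2 / c^2 * Real.exp (c * l) := by
    rw [div_mul_eq_mul_div, le_div_iff₀ (by positivity)]
    nlinarith [mul_nonneg hc.le hl]
  calc _ ≤ 2 / c^2 * Real.exp (c * l) * Real.exp (-(2 * c) * l) := by gcongr
    _ = _ := by rw [mul_assoc, ← Real.exp_add]; congr 2; ring

lemma psi1_bound : ∃ c C : ℝ, 0 < c ∧ c ≤ 1 ∧ 0 < C ∧ ∀ x : ℝ, Real.exp 1 ≤ x →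
    |psi1 x - x ^ 2 / 2| ≤ C * x ^ 2 * Er c x := by
  obtain ⟨b, C, hb0, hb1, hC, h⟩ := ZD_bounds
  refine ⟨b / 6, 72 * C * (2 / (b/6)^2) + 1, by positivity, by linarith, by positivity, ?_⟩
  intro x hx
  have he : (2:ℝ) ≤ Real.exp 1 := by linarith [Real.add_one_le_exp 1]
  have hx1 : 1 ≤ x := by linarith
  have hx0 : 0 < x := by linarith
  have hlog : 1 ≤ Real.log x := (Real.le_log_iff_exp_le hx0).mpr hx
  unfold Er
  set l := Real.sqrt (Real.log x) with hl
  have hl2 : l ^ 2 = Real.log x := Real.sq_sqrt (by linarith)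
  have hl1 : 1 ≤ l := Real.one_le_sqrt.mpr hlog
  set T := Real.exp l with hT
  have hT2 : 2 ≤ T := he.trans (Real.exp_le_exp.mpr hl1)
  have hL1 : l ≤ LL T := by
    unfold LL; rw [Real.le_log_iff_exp_le (by positivity), abs_of_pos (by positivity)]; linarith
  have hL2 : LL T ≤ 3 * l := by
    unfold LL; rw [Real.log_le_iff_le_exp (by positivity), abs_of_pos (by positivity)]
    rw [show 3 * l = l + l + l by ring, Real.exp_add, Real.exp_add, ← hT]
    nlinarith
  have hLp : 0 < LL T := by linarith
  set δ := b / LL T with hδ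
  have hδ0 : 0 < δ := by positivity
  have hδb : δ ≤ b := div_le_self hb0.le (one_le_LL T)
  obtain ⟨h1, h2⟩ := h T
  have key := contour_bound (x := x) (T := T) (δ := δ) (M := C * LL T ^ 2) hx1 (by linarith) hδ0 (by linarith)
    (by positivity) (by
      intro σ t ht; exact h1 σ t (by rwa [abs_of_pos (by positivity : 0 < T)])) h2
  have e1 : x ^ (1 - δ) ≤ x * Real.exp (-(2 * (b / 6)) * l) := by
    rw [Real.rpow_sub hx0, Real.rpow_one, div_eq_mul_inv, ← Real.rpow_neg hx0.le, Real.rpow_def_of_pos hx0]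
    refine mul_le_mul_of_nonneg_left (Real.exp_le_exp.mpr ?_) hx0.le
    rw [← hl2]
    have : b / (3 * l) ≤ δ := by rw [hδ]; gcongr
    have h3 : b / (3 * l) * l ^ 2 = b / 3 * l := by field_simp
    nlinarith [mul_le_mul_of_nonneg_right this (sq_nonneg l)]
  have e2 : x ^ (1 + δ) / T ≤ x * Real.exp (-(2 * (b / 6)) * l) := by
    rw [Real.rpow_add hx0, Real.rpow_one, Real.rpow_def_of_pos hx0, mul_div_assoc, hT, ← Real.exp_sub]
    refine mul_le_mul_of_nonneg_left (Real.exp_le_exp.mpr ?_) hx0.le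
    rw [← hl2]
    have : δ ≤ b / l := by rw [hδ]; gcongr
    have h3 : b / l * l ^ 2 = b * l := by field_simp
    nlinarith [mul_le_mul_of_nonneg_right this (sq_nonneg l)]
  have e3 : 4 * (C * LL T ^ 2) * (x ^ (1 - δ) + x ^ (1 + δ) / T) ≤ 72 * C * (2 / (b/6)^2) * (x * Real.exp (-(b/6) * l)) := by
    calc _ ≤ 4 * (C * (3 * l) ^ 2) * (x * Real.exp (-(2 * (b / 6)) * l) + x * Real.exp (-(2 * (b / 6)) * l)) := by gcongr
      _ = 72 * C * x * (l ^ 2 * Real.exp (-(2 * (b / 6)) * l)) := by ring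
      _ ≤ 72 * C * x * (2 / (b/6)^2 * Real.exp (-(b/6) * l)) := by
        have := sq_mul_exp_le (c := b / 6) (l := l) (by positivity) (by linarith)
        gcongr
      _ = _ := by ring
  have e4 : 1 ≤ x * Real.exp (-(b/6) * l) := by
    have : x = Real.exp (Real.log x) := (Real.exp_log hx0).symm
    nth_rw 1 [this]
    rw [← Real.exp_add, Real.one_le_exp_iff, ← hl2]
    nlinarith
  have e5 : |x / 2 - psi1 x / x| ≤ (72 * C * (2 / (b/6)^2) + 1) * (x * Real.exp (-(b/6) * l)) := by
    have a1 : 1 / (2 * x) ≤ 1 := by rw [div_le_one (by positivity)]; linarith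
    have a2 : 0 < 1 / (2 * x) := by positivity
    have a3 : |x / 2 - psi1 x / x| ≤ |x / 2 - 1 + 1 / (2 * x) - psi1 x / x| + 1 := by
      have : |1 - 1 / (2 * x)| ≤ 1 := abs_le.mpr ⟨by linarith, by linarith⟩
      calc _ = |(x / 2 - 1 + 1 / (2 * x) - psi1 x / x) + (1 - 1 / (2 * x))| := by ring_nf
        _ ≤ _ := (abs_add_le _ _).trans (by linarith)
    linarith
  have e6 : |psi1 x - x ^ 2 / 2| = x * |x / 2 - psi1 x / x| := by
    rw [← abs_of_pos hx0, ← abs_mul, abs_of_pos hx0, ← abs_neg]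
    congr 1; field_simp; ring
  rw [e6]
  calc _ ≤ x * ((72 * C * (2 / (b/6)^2) + 1) * (x * Real.exp (-(b/6) * l))) := by gcongr
    _ = _ := by ring

lemma psi1_convex {y z : ℝ} (_hy : 0 ≤ y) (hz : 0 ≤ z) : psi1 y + (z - y) * Chebyshev.psi y ≤ psi1 z := by
  have e : psi1 y + (z - y) * Chebyshev.psi y = ∑ n ∈ Finset.range (⌊y⌋₊ + 1), ArithmeticFunction.vonMangoldt n * (z - n) := by
    have : Finset.Icc 0 ⌊y⌋₊ = Finset.range (⌊y⌋₊ + 1) := by ext n; simp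
    rw [Chebyshev.psi_eq_sum_Icc, this, psi1, Finset.mul_sum, ← Finset.sum_add_distrib]
    exact Finset.sum_congr rfl fun n _ => by ring
  rw [e, psi1]
  rcases le_total y z with h | h
  · apply Finset.sum_le_sum_of_subset_of_nonneg
    · apply Finset.range_subset_range.mpr
      have := Nat.floor_le_floor h; omega
    · intro n hn _
      rw [Finset.mem_range, Nat.lt_succ_iff, Nat.le_floor_iff hz] at hn
      exact mul_nonneg ArithmeticFunction.vonMangoldt_nonneg (by linarith)
  · have hsub : Finset.range (⌊z⌋₊ + 1) ⊆ Finset.range (⌊y⌋₊ + 1) := by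
      apply Finset.range_subset_range.mpr
      have := Nat.floor_le_floor h; omega
    rw [← Finset.sum_sdiff hsub]
    have : ∑ n ∈ Finset.range (⌊y⌋₊ + 1) \ Finset.range (⌊z⌋₊ + 1), ArithmeticFunction.vonMangoldt n * (z - n) ≤ 0 := by
      apply Finset.sum_nonpos
      intro n hn
      rw [Finset.mem_sdiff, Finset.mem_range, Finset.mem_range, not_lt, Nat.succ_le_iff, Nat.floor_lt hz] at hn
      exact mul_nonpos_of_nonneg_of_nonpos ArithmeticFunction.vonMangoldt_nonneg (by linarith)
    linarith

lemma psi_bound : ∃ c C : ℝ, 0 < c ∧ c ≤ 1 / 4 ∧ 0 < C ∧ ∀ x : ℝ, 2 * Real.exp 1 ≤ x →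
    |Chebyshev.psi x - x| ≤ C * x * Er c x := by
  obtain ⟨c, C, hc, hc1, hC, h⟩ := psi1_bound
  refine ⟨c / 4, 20 * C + 1, by positivity, by linarith, by positivity, ?_⟩
  intro x hx
  have he : (2:ℝ) ≤ Real.exp 1 := by linarith [Real.add_one_le_exp 1]
  have hx0 : 0 < x := by linarith
  set q := Er (c / 4) x with hq
  have hq0 : 0 < q := Er_pos _ _
  have hq1 : q ≤ 1 := Er_le_one (by linarith) _
  have hq2 : Er (c / 2) x = q ^ 2 := by
    rw [show c / 2 = c / 4 + c / 4 by ring, Er_mul, sq]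
  have hlog : 1 ≤ Real.log x := (Real.le_log_iff_exp_le hx0).mpr (by linarith)
  -- local error
  have hE : ∀ y, x / 2 ≤ y → y ≤ 3 / 2 * x → |psi1 y - y ^ 2 / 2| ≤ 9 / 4 * C * x ^ 2 * q ^ 2 := by
    intro y h1 h2
    have hy := h y (by linarith)
    have e1 : Er c y ≤ q ^ 2 := by
      rw [← hq2]
      refine (Er_anti hc.le (by positivity) h1).trans ?_
      unfold Er
      apply Real.exp_le_exp.mpr
      have : Real.sqrt (Real.log x) / 2 ≤ Real.sqrt (Real.log (x / 2)) := by
        apply Real.le_sqrt_of_sq_le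
        rw [div_pow, Real.sq_sqrt (by linarith), Real.log_div hx0.ne' (by norm_num)]
        have := Real.log_two_lt_d9
        norm_num at this ⊢
        linarith
      nlinarith
    refine hy.trans ?_
    calc _ ≤ C * (3/2 * x) ^ 2 * q ^ 2 := by 
          have : 0 ≤ y := by linarith
          have := Er_pos c y
          gcongr
      _ = _ := by ring
  set k := x / 2 * q with hk
  have hk0 : 0 < k := by positivity
  have hk1 : k ≤ x / 2 := mul_le_of_le_one_right (by linarith) hq1
  have c1 := psi1_convex (y := x) (z := x + k) hx0.le (by linarith)
  have c2 := psi1_convex (y := x) (z := x - k) hx0.le (by linarith)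
  have b0 := abs_le.mp (hE x (by linarith) (by linarith))
  have b1 := abs_le.mp (hE (x + k) (by linarith) (by linarith))
  have b2 := abs_le.mp (hE (x - k) (by linarith) (by linarith))
  have hkq : k * (9 * C * x * q) = 9 / 2 * C * x ^ 2 * q ^ 2 := by rw [hk]; ring
  have hkk : k * (k / 2) = k ^ 2 / 2 := by ring
  have hup : k * Chebyshev.psi x ≤ k * (x + k / 2 + 9 * C * x * q) := by nlinarith
  have hlo : k * (x - k / 2 - 9 * C * x * q) ≤ k * Chebyshev.psi x := by nlinarith
  have hup' := le_of_mul_le_mul_left hup hk0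
  have hlo' := le_of_mul_le_mul_left hlo hk0
  have hp : 0 ≤ C * x * q := by positivity
  have hp2 : 0 ≤ x * q := by positivity
  rw [abs_le]
  constructor <;> nlinarith

lemma theta_bound : ∃ c C : ℝ, 0 < c ∧ c ≤ 1 / 4 ∧ 0 < C ∧ ∀ x : ℝ, 1 ≤ x →
    |Chebyshev.theta x - x| ≤ C * x * Er c x := by
  obtain ⟨c, C, hc, hc1, hC, h⟩ := psi_bound
  obtain ⟨D, hD⟩ := Chebyshev.psi_sub_theta_le_mul_sqrt
  refine ⟨c, C + |D| + 3 * Real.exp 1, hc, hc1, by positivity, ?_⟩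
  intro x hx
  have hx0 : 0 < x := by linarith
  have hq0 := Er_pos c x
  have he : (2:ℝ) ≤ Real.exp 1 := by linarith [Real.add_one_le_exp 1]
  have he3 := Real.exp_one_lt_d9
  have hxq : 0 < x * Er c x := by positivity
  by_cases hx2 : 2 * Real.exp 1 ≤ x
  · have h1 := abs_le.mp (h x hx2)
    have h2 := hD x
    have h3 := Chebyshev.theta_le_psi x
    have hlog : 1 ≤ Real.log x := (Real.le_log_iff_exp_le hx0).mpr (by linarith)
    have h4 : Real.sqrt x ≤ x * Er c x := by
      have e1 : Real.sqrt x = Real.exp (Real.log x / 2) := by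
        rw [Real.sqrt_eq_rpow, Real.rpow_def_of_pos hx0]; congr 1; ring
      have e2 : x = Real.exp (Real.log x) := (Real.exp_log hx0).symm
      rw [e1, Er]
      nth_rw 2 [e2]
      rw [← Real.exp_add]
      apply Real.exp_le_exp.mpr
      have e3 : Real.sqrt (Real.log x) ≤ Real.log x := by
        apply Real.sqrt_le_iff.mpr ⟨by linarith, by nlinarith⟩
      have := Real.sqrt_nonneg (Real.log x)
      nlinarith
    have h5 : D * Real.sqrt x ≤ |D| * (x * Er c x) :=
      mul_le_mul (le_abs_self D) h4 (Real.sqrt_nonneg _) (abs_nonneg _)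
    rw [abs_le]
    have : 0 ≤ |D| * (x * Er c x) := by positivity
    constructor <;> nlinarith
  · push Not at hx2
    have h1 := Chebyshev.theta_nonneg x
    have h2 := Chebyshev.theta_le_log4_mul_x hx0.le
    have h3 : Real.log 4 ≤ 2 := by
      rw [show (4:ℝ) = 2^2 by norm_num, Real.log_pow]; have := Real.log_two_lt_d9; norm_num; linarith
    have h4 : |Chebyshev.theta x - x| ≤ 3 * x := by
      rw [abs_le]; constructor <;> nlinarith
    have h5 : 1 ≤ Real.exp 1 * Er c x := by
      rw [Er, ← Real.exp_add, Real.one_le_exp_iff]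
      have : Real.sqrt (Real.log x) ≤ 4 := by
        apply Real.sqrt_le_iff.mpr ⟨by norm_num, ?_⟩
        have := Real.log_le_self hx0.le
        linarith
      have := Real.sqrt_nonneg (Real.log x)
      nlinarith
    calc _ ≤ 3 * x := h4
      _ ≤ 3 * x * (Real.exp 1 * Er c x) := le_mul_of_one_le_right (by linarith) h5
      _ = 3 * Real.exp 1 * (x * Er c x) := by ring
      _ ≤ (C + |D| + 3 * Real.exp 1) * (x * Er c x) := by gcongr; have := abs_nonneg D; linarith
      _ = _ := by ring

end

section
open MeasureTheory Set

lemma int_sqrt_bound {y K : ℝ} (hy : 2 ≤ y) (hK : 0 ≤ K) {g : ℝ → ℝ}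
    (h : ∀ t ∈ Ioc 2 y, |g t| ≤ K * (Real.sqrt y / Real.sqrt t)) :
    |∫ t in (2:ℝ)..y, g t| ≤ 2 * K * y := by
  have hcont : ContinuousOn (fun t : ℝ => Real.sqrt y / Real.sqrt t) (uIcc 2 y) := by
    rw [uIcc_of_le hy]
    refine ContinuousOn.div (by fun_prop) (by fun_prop) ?_
    intro t ht
    have : 0 < t := by linarith [ht.1]
    positivity
  have hinteg : IntervalIntegrable (fun t : ℝ => Real.sqrt y / Real.sqrt t) volume 2 y := hcont.intervalIntegrable
  have e1 : ∫ t in (2:ℝ)..y, Real.sqrt y / Real.sqrt t = 2 * Real.sqrt y * Real.sqrt y - 2 * Real.sqrt y * Real.sqrt 2 := by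
    refine intervalIntegral.integral_eq_sub_of_hasDerivAt (f := fun t => 2 * Real.sqrt y * Real.sqrt t) ?_ hinteg
    intro t ht
    rw [uIcc_of_le hy] at ht
    have ht0 : 0 < t := by linarith [ht.1]
    have := (Real.hasDerivAt_sqrt ht0.ne').const_mul (2 * Real.sqrt y)
    convert! this using 1
    field_simp
  have e2 := intervalIntegral.norm_integral_le_of_norm_le (f := g) (g := fun t => K * (Real.sqrt y / Real.sqrt t)) hy
    (Filter.Eventually.of_forall h) (hinteg.const_mul K)
  rw [intervalIntegral.integral_const_mul, e1, Real.norm_eq_abs] at e2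
  refine e2.trans ?_
  have h1 := Real.mul_self_sqrt (by linarith : 0 ≤ y)
  have h2 : 0 ≤ Real.sqrt y * Real.sqrt 2 := by positivity
  calc _ = 2 * K * (Real.sqrt y * Real.sqrt y) - 2 * K * (Real.sqrt y * Real.sqrt 2) := by ring
    _ ≤ 2 * K * (Real.sqrt y * Real.sqrt y) := by
      have : 0 ≤ 2 * K * (Real.sqrt y * Real.sqrt 2) := by positivity
      linarith
    _ = _ := by rw [h1]

lemma half_le_log {t : ℝ} (ht : 2 ≤ t) : 1 / 2 ≤ Real.log t := by
  have := Real.log_two_gt_d9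
  have h2 := Real.log_le_log (by norm_num) ht
  norm_num at this
  linarith

lemma Er_sqrt_mono {c t y : ℝ} (hc : 0 ≤ c) (hc1 : c ≤ 1 / 4) (ht : 2 ≤ t) (hy : t ≤ y) :
    Er c t ≤ Er c y * (Real.sqrt y / Real.sqrt t) := by
  have ht0 : 0 < t := by linarith
  have hy0 : 0 < y := by linarith
  have hs : ∀ z : ℝ, 0 < z → Real.sqrt z = Real.exp (Real.log z / 2) := by
    intro z hz
    rw [Real.sqrt_eq_rpow, Real.rpow_def_of_pos hz]; congr 1; ring
  rw [hs y hy0, hs t ht0, ← Real.exp_sub, Er, Er, ← Real.exp_add]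
  apply Real.exp_le_exp.mpr
  have l1 := half_le_log ht
  have l2 := half_le_log (ht.trans hy)
  have l3 := Real.log_le_log ht0 hy
  have q1 := Real.sq_sqrt (by linarith : 0 ≤ Real.log t)
  have q2 := Real.sq_sqrt (by linarith : 0 ≤ Real.log y)
  have q3 := Real.sqrt_le_sqrt l3
  have q4 : 1 / 2 ≤ Real.sqrt (Real.log t) := Real.le_sqrt_of_sq_le (by linarith)
  set u := Real.sqrt (Real.log t)
  set v := Real.sqrt (Real.log y)
  rw [← q1, ← q2]
  nlinarith [mul_nonneg (sub_nonneg.mpr q3) (by linarith : 0 ≤ (u + v) / 2 - c)]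

lemma one_le_mul_Er {c y : ℝ} (hc1 : c ≤ 1 / 4) (hy : 2 ≤ y) : 1 ≤ y * Er c y := by
  have hy0 : 0 < y := by linarith
  have l2 := half_le_log hy
  have q2 := Real.sq_sqrt (by linarith : 0 ≤ Real.log y)
  have q4 : 1 / 2 ≤ Real.sqrt (Real.log y) := Real.le_sqrt_of_sq_le (by linarith)
  have : y = Real.exp (Real.log y) := (Real.exp_log hy0).symm
  nth_rw 1 [this]
  rw [Er, ← Real.exp_add, Real.one_le_exp_iff]
  nlinarith

lemma contOn_inv_log {a y : ℝ} (ha : 1 < a) : ContinuousOn (fun t : ℝ => 1 / Real.log t) (Icc a y) := by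
  refine ContinuousOn.div (by fun_prop) (Real.continuousOn_log.mono ?_) ?_
  · intro t ht; have := ht.1; simp; linarith
  · intro t ht; exact (Real.log_pos (by linarith [ht.1])).ne'

lemma Li_bound {y : ℝ} (hy : 2 ≤ y) : |Li y| ≤ 8 * y / Real.log y := by
  have l2 := half_le_log hy
  have hlt := Real.log_two_gt_d9
  unfold Li
  have := int_sqrt_bound hy (K := 4 / Real.log y) (by positivity) (g := fun t => 1 / Real.log t) ?_
  · refine this.trans (le_of_eq (by ring))
  · intro t ht
    have ht0 : 0 < t := by linarith [ht.1]
    have lt := half_le_log ht.1.le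
    have hy0 : 0 < y := by linarith
    rw [abs_of_pos (by positivity), ← Real.sqrt_div hy0.le, div_mul_eq_mul_div, div_le_div_iff₀ (by linarith) (by linarith)]
    have hz : 1 ≤ y / t := by rw [le_div_iff₀ ht0]; linarith [ht.2]
    have hz' : 1 ≤ Real.sqrt (y / t) := Real.one_le_sqrt.mpr hz
    have e1 : Real.log y = Real.log t + 2 * Real.log (Real.sqrt (y / t)) := by
      rw [Real.log_sqrt (by positivity), Real.log_div hy0.ne' ht0.ne']; ring
    have e2 := Real.log_le_sub_one_of_pos (by linarith : 0 < Real.sqrt (y / t))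
    have l3 := Real.log_le_log (by norm_num) ht.1.le
    norm_num at hlt
    nlinarith

lemma primePi_eq (y : ℝ) (hy : 0 ≤ y) : primePi y = Nat.primeCounting ⌊y⌋₊ := by
  unfold primePi
  rw [Nat.primeCounting, Nat.primeCounting', Nat.count_eq_card_filter_range, ← Set.ncard_coe_finset]
  congr 1
  ext p
  simp only [mem_setOf_eq, Finset.coe_filter, Finset.mem_range, Nat.lt_succ_iff, Nat.le_floor_iff hy]
  tauto

lemma pi_bound : ∃ c C : ℝ, 0 < c ∧ c ≤ 1 / 4 ∧ 0 < C ∧ ∀ y : ℝ, 2 ≤ y →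
    |(primePi y : ℝ) - Li y| ≤ C * y * Er c y := by
  obtain ⟨c, C, hc, hc1, hC, h⟩ := theta_bound
  refine ⟨c, 2 * C + 8 * C + 4, hc, hc1, by positivity, ?_⟩
  intro y hy
  have hy0 : 0 < y := by linarith
  have ly := half_le_log hy
  have hq := Er_pos c y
  rw [primePi_eq y hy0.le, Chebyshev.primeCounting_eq_theta_div_log_add_integral hy]
  -- formula for Li
  have hne : ∀ t ∈ Icc 2 y, t ≠ 0 ∧ Real.log t ≠ 0 := by
    intro t ht
    have := half_le_log ht.1
    exact ⟨by linarith [ht.1], by linarith⟩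
  have c1 : ContinuousOn (fun t : ℝ => 1 / Real.log t) (Icc 2 y) := contOn_inv_log (by norm_num)
  have c2 : ContinuousOn (fun t : ℝ => t / (t * Real.log t ^ 2)) (Icc 2 y) := by
    refine ContinuousOn.div (by fun_prop) (continuousOn_id.mul ((Real.continuousOn_log.mono ?_).pow 2)) ?_
    · intro t ht; exact (hne t ht).1
    · intro t ht; exact mul_ne_zero (hne t ht).1 (pow_ne_zero 2 (hne t ht).2)
  have i1 : IntervalIntegrable (fun t : ℝ => 1 / Real.log t) volume 2 y := by
    apply ContinuousOn.intervalIntegrable; rwa [uIcc_of_le hy]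
  have i2 : IntervalIntegrable (fun t : ℝ => t / (t * Real.log t ^ 2)) volume 2 y := by
    apply ContinuousOn.intervalIntegrable; rwa [uIcc_of_le hy]
  have i3 : IntervalIntegrable (fun t : ℝ => Chebyshev.theta t / (t * Real.log t ^ 2)) volume 2 y := by
    rw [intervalIntegrable_iff_integrableOn_Icc_of_le hy]
    exact Chebyshev.integrableOn_theta_div_id_mul_log_sq y
  have hLi : Li y = y / Real.log y - 2 / Real.log 2 + ∫ t in (2:ℝ)..y, t / (t * Real.log t ^ 2) := by
    have : ∫ t in (2:ℝ)..y, (1 / Real.log t - t / (t * Real.log t ^ 2)) = y / Real.log y - 2 / Real.log 2 := by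
      refine intervalIntegral.integral_eq_sub_of_hasDerivAt (f := fun t => t / Real.log t) ?_ (i1.sub i2)
      intro t ht
      rw [uIcc_of_le hy] at ht
      obtain ⟨n1, n2⟩ := hne t ht
      have := (hasDerivAt_id t).div (Real.hasDerivAt_log n1) n2
      convert! this using 1
      simp only [id]
      field_simp
    rw [intervalIntegral.integral_sub i1 i2] at this
    unfold Li
    linarith
  have hI : |∫ t in (2:ℝ)..y, (Chebyshev.theta t / (t * Real.log t ^ 2) - t / (t * Real.log t ^ 2))| ≤ 2 * (4 * C * Er c y) * y := by
    refine int_sqrt_bound hy (by positivity) ?_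
    intro t ht
    have ht0 : 0 < t := by linarith [ht.1]
    have lt := half_le_log ht.1.le
    rw [← sub_div, abs_div, abs_of_pos (by positivity : 0 < t * Real.log t ^ 2), div_le_iff₀ (by positivity)]
    have hth := h t (by linarith [ht.1])
    have hE := Er_sqrt_mono hc.le hc1 ht.1.le ht.2
    have hl : 1 ≤ 4 * Real.log t ^ 2 := by nlinarith
    calc _ ≤ C * t * Er c t := hth
      _ ≤ C * t * (Er c y * (Real.sqrt y / Real.sqrt t)) := by gcongr
      _ ≤ C * t * (Er c y * (Real.sqrt y / Real.sqrt t)) * (4 * Real.log t ^ 2) := le_mul_of_one_le_right (by positivity) hl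
      _ = _ := by ring
  rw [intervalIntegral.integral_sub i3 i2] at hI
  have hth := h y (by linarith)
  have h1 : |(Chebyshev.theta y - y) / Real.log y| ≤ 2 * (C * y * Er c y) := by
    rw [abs_div, abs_of_pos (by linarith : 0 < Real.log y), div_le_iff₀ (by linarith)]
    have : 0 ≤ C * y * Er c y := by positivity
    nlinarith
  have h2 : 2 / Real.log 2 ≤ 4 * (y * Er c y) := by
    have := half_le_log (le_refl (2:ℝ))
    have h3 := one_le_mul_Er hc1 hy
    rw [div_le_iff₀ (by linarith)]
    nlinarith
  have h2' : 0 < 2 / Real.log 2 := by positivity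
  rw [hLi]
  rw [sub_div] at h1
  rw [abs_le] at h1 hI ⊢
  constructor <;> nlinarith

end

section
open MeasureTheory Set

lemma Li_hasDerivAt {y : ℝ} (hy : 1 < y) : HasDerivAt Li (1 / Real.log y) y := by
  unfold Li
  have hsub : ∀ z ∈ uIcc 2 y, 1 < z := by
    intro z hz
    have := hz.1
    rcases min_choice 2 y with h | h <;> rw [h] at this <;> linarith
  have hc : ∀ z : ℝ, 1 < z → ContinuousAt (fun t : ℝ => 1 / Real.log t) z := by
    intro z hz
    exact continuousAt_const.div (Real.continuousAt_log (by linarith)) (Real.log_pos hz).ne'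
  refine intervalIntegral.integral_hasDerivAt_right ?_ ?_ (hc y hy)
  · exact ContinuousOn.intervalIntegrable (fun z hz => (hc z (hsub z hz)).continuousWithinAt)
  · exact ContinuousOn.stronglyMeasurableAtFilter isOpen_Ioi
      (fun z hz => (hc z hz).continuousWithinAt) y hy

lemma ind_sum {t : ℝ} (ht : 0 ≤ t) :
    ∑ k ∈ Finset.Icc 0 ⌊t⌋₊, (if k.Prime then (1:ℝ) else 0) = primePi t := by
  rw [primePi_eq t ht, Nat.primeCounting, Nat.primeCounting', Nat.count_eq_card_filter_range, Finset.sum_boole]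
  congr 2
  ext p
  simp [Nat.lt_succ_iff]

lemma abel_li {a B x : ℝ} (ha : 2 ≤ a) (haB : a ≤ B) (hx : B ^ 2 = x) :
    let D : ℝ → ℝ := fun t => 1 / Real.log (x / t) * (-(x / t ^ 2))
    ∑ k ∈ Finset.Ioc ⌊a⌋₊ ⌊B⌋₊, Li (x / k) * (if k.Prime then (1:ℝ) else 0)
      - ∫ u in a..B, Li (x / u) / Real.log u =
    Li (x / B) * (primePi B - Li B) - Li (x / a) * (primePi a - Li a)
      - ∫ t in a..B, D t * (primePi t - Li t) := by
  intro D
  have hge : ∀ t ∈ Icc a B, B ≤ x / t := by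
    intro t ht
    have : 0 < t := by linarith [ht.1]
    rw [le_div_iff₀ this, ← hx]; nlinarith [ht.2, ht.1]
  have hd : ∀ t ∈ Icc a B, HasDerivAt (fun u => Li (x / u)) (D t) t := by
    intro t ht
    have ht0 : t ≠ 0 := by linarith [ht.1]
    have h1 : HasDerivAt (fun u : ℝ => x / u) (-(x / t ^ 2)) t := by
      have := (hasDerivAt_const t x).div (hasDerivAt_id t) ht0
      convert! this using 1
      simp only [id]
      ring
    exact (Li_hasDerivAt (by linarith [hge t ht])).comp t h1
  have hDc : ContinuousOn D (Icc a B) := by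
    have hne : ∀ t ∈ Icc a B, t ≠ 0 := fun t ht => by linarith [ht.1]
    refine ContinuousOn.mul (ContinuousOn.div continuousOn_const (ContinuousOn.log ?_ ?_) ?_) (ContinuousOn.neg ?_)
    · exact continuousOn_const.div continuousOn_id hne
    · intro t ht; linarith [hge t ht]
    · intro t ht; exact (Real.log_pos (by linarith [hge t ht])).ne'
    · exact continuousOn_const.div (by fun_prop) (fun t ht => pow_ne_zero 2 (hne t ht))
  have hdint : IntegrableOn (deriv (fun u => Li (x / u))) (Icc a B) := by
    refine (hDc.integrableOn_Icc).congr_fun (fun t ht => (hd t ht).deriv.symm) measurableSet_Icc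
  have A := sum_mul_eq_sub_sub_integral_mul (fun k : ℕ => if k.Prime then (1:ℝ) else 0) (f := fun u => Li (x / u))
    (by linarith : 0 ≤ a) haB (fun t ht => (hd t ht).differentiableAt) hdint
  have hi := integrableOn_mul_sum_Icc (m := 0) (fun k : ℕ => if k.Prime then (1:ℝ) else 0) (by linarith : 0 ≤ a) hDc.integrableOn_Icc
  have hi' : IntervalIntegrable (fun t => D t * primePi t) volume a B := by
    rw [intervalIntegrable_iff_integrableOn_Icc_of_le haB]
    refine hi.congr_fun (fun t ht => ?_) measurableSet_Icc
    simp only []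
    rw [ind_sum (by linarith [ht.1])]
  rw [ind_sum (by linarith), ind_sum (by linarith)] at A
  have e1 : ∫ t in Ioc a B, deriv (fun u => Li (x / u)) t * ∑ k ∈ Finset.Icc 0 ⌊t⌋₊, (if k.Prime then (1:ℝ) else 0)
      = ∫ t in a..B, D t * primePi t := by
    rw [intervalIntegral.integral_of_le haB]
    refine setIntegral_congr_fun measurableSet_Ioc (fun t ht => ?_)
    rw [ind_sum (by linarith [ht.1]), (hd t ⟨ht.1.le, ht.2⟩).deriv]
  rw [e1] at A
  have hLd : ∀ t ∈ Icc a B, HasDerivAt Li (1 / Real.log t) t := fun t ht => Li_hasDerivAt (by linarith [ht.1])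
  have hLc : ContinuousOn Li (Icc a B) := fun t ht => (hLd t ht).continuousAt.continuousWithinAt
  have hDi : IntervalIntegrable D volume a B := by
    apply ContinuousOn.intervalIntegrable; rwa [uIcc_of_le haB]
  have hli : IntervalIntegrable (fun t : ℝ => 1 / Real.log t) volume a B := by
    apply ContinuousOn.intervalIntegrable; rw [uIcc_of_le haB]; exact contOn_inv_log (by linarith)
  have P := intervalIntegral.integral_deriv_mul_eq_sub (u := fun u => Li (x / u)) (v := Li) (a := a) (b := B)
    (u' := D) (v' := fun t => 1 / Real.log t)
    (by rw [uIcc_of_le haB]; exact hd) (by rw [uIcc_of_le haB]; exact hLd) hDi hli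
  have hDL : IntervalIntegrable (fun t => D t * Li t) volume a B := by
    apply ContinuousOn.intervalIntegrable; rw [uIcc_of_le haB]; exact hDc.mul hLc
  have hfc : ContinuousOn (fun t => Li (x / t)) (Icc a B) := fun t ht => (hd t ht).continuousAt.continuousWithinAt
  have hfl : IntervalIntegrable (fun t => Li (x / t) * (1 / Real.log t)) volume a B := by
    apply ContinuousOn.intervalIntegrable; rw [uIcc_of_le haB]; exact hfc.mul (contOn_inv_log (by linarith))
  rw [intervalIntegral.integral_add hDL hfl] at P
  have e2 : ∫ u in a..B, Li (x / u) / Real.log u = ∫ u in a..B, Li (x / u) * (1 / Real.log u) := by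
    congr 1; ext u; ring
  have e3 : ∫ t in a..B, D t * (primePi t - Li t) = (∫ t in a..B, D t * primePi t) - ∫ t in a..B, D t * Li t := by
    rw [← intervalIntegral.integral_sub hi' hDL]; congr 1; ext u; ring
  rw [e2, e3, A]
  linarith

lemma Er_sqrt {c z : ℝ} (hc : 0 ≤ c) (hz : 1 ≤ z) : Er c (Real.sqrt z) ≤ Er (c / 2) z := by
  unfold Er
  apply Real.exp_le_exp.mpr
  rw [Real.log_sqrt (by linarith)]
  have hl := Real.log_nonneg hz
  have : Real.sqrt (Real.log z) / 2 ≤ Real.sqrt (Real.log z / 2) := by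
    apply Real.le_sqrt_of_sq_le
    rw [div_pow, Real.sq_sqrt hl]; linarith
  nlinarith

lemma log_sq_Er {c z : ℝ} (hc : 0 < c) (hz : 1 ≤ z) : Real.log z ^ 2 * Er c z ≤ 24 / c ^ 4 := by
  have hl := Real.log_nonneg hz
  have h := Real.pow_div_factorial_le_exp (x := c * Real.sqrt (Real.log z)) (by positivity) 4
  have h4 : Real.sqrt (Real.log z) ^ 4 = Real.log z ^ 2 := by
    rw [show (4:ℕ) = 2 * 2 from rfl, pow_mul, Real.sq_sqrt hl]
  rw [mul_pow, h4] at h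
  have hE : Er c z * Real.exp (c * Real.sqrt (Real.log z)) = 1 := by
    unfold Er; rw [← Real.exp_add]; simp
  have hp := Er_pos c z
  rw [le_div_iff₀ (by positivity)]
  have hf : ((Nat.factorial 4 : ℕ) : ℝ) = 24 := by norm_num [Nat.factorial]
  rw [hf, div_le_iff₀ (by norm_num)] at h
  calc _ = Er c z * (c ^ 4 * Real.log z ^ 2) := by ring
    _ ≤ Er c z * (Real.exp (c * Real.sqrt (Real.log z)) * 24) := by gcongr
    _ = (Er c z * Real.exp (c * Real.sqrt (Real.log z))) * 24 := by ring
    _ = 24 := by rw [hE]; norm_num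

lemma int_inv_log_sq {a B K : ℝ} (ha : 2 ≤ a) (haB : a ≤ B) (hK : 0 ≤ K) {g : ℝ → ℝ}
    (h : ∀ t ∈ Ioc a B, |g t| ≤ K * (1 / (t * Real.log t ^ 2))) :
    |∫ t in a..B, g t| ≤ 2 * K := by
  have hne : ∀ t ∈ Icc a B, 0 < t ∧ 0 < Real.log t := by
    intro t ht
    have := half_le_log (ha.trans ht.1)
    exact ⟨by linarith [ht.1], by linarith⟩
  have hcont : ContinuousOn (fun t : ℝ => 1 / (t * Real.log t ^ 2)) (Icc a B) := by
    refine ContinuousOn.div (by fun_prop) (continuousOn_id.mul ((Real.continuousOn_log.mono ?_).pow 2)) ?_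
    · intro t ht; exact (hne t ht).1.ne'
    · intro t ht; exact mul_ne_zero (hne t ht).1.ne' (pow_ne_zero 2 (hne t ht).2.ne')
  have hinteg : IntervalIntegrable (fun t : ℝ => 1 / (t * Real.log t ^ 2)) volume a B := by
    apply ContinuousOn.intervalIntegrable; rwa [uIcc_of_le haB]
  have e1 : ∫ t in a..B, 1 / (t * Real.log t ^ 2) = -(Real.log B)⁻¹ - -(Real.log a)⁻¹ := by
    refine intervalIntegral.integral_eq_sub_of_hasDerivAt (f := fun t => -(Real.log t)⁻¹) ?_ hinteg
    intro t ht
    rw [uIcc_of_le haB] at ht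
    obtain ⟨h1, h2⟩ := hne t ht
    have := ((Real.hasDerivAt_log h1.ne').inv h2.ne').neg
    convert! this using 1
    field_simp
  have e2 := intervalIntegral.norm_integral_le_of_norm_le (f := g) haB
    (Filter.Eventually.of_forall h) (hinteg.const_mul K)
  rw [intervalIntegral.integral_const_mul, e1, Real.norm_eq_abs] at e2
  refine e2.trans ?_
  have h1 : 0 < (Real.log B)⁻¹ := inv_pos.mpr (hne B ⟨haB, le_rfl⟩).2
  have h2 : (Real.log a)⁻¹ ≤ 2 := by
    rw [inv_le_comm₀ (hne a ⟨le_rfl, haB⟩).2 (by norm_num)]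
    have := half_le_log ha; linarith
  nlinarith

theorem stmt_aux :
    ∃ c C : ℝ, 0 < c ∧ 0 < C ∧ ∀ x r : ℝ, 1 ≤ r → r ≤ x / 4 →
      |(∑ p ∈ (Finset.range (⌊Real.sqrt x⌋₊ + 1)).filter
            (fun p : ℕ => p.Prime ∧ Real.sqrt (x / r) < (p : ℝ) ∧ (p : ℝ) ≤ Real.sqrt x),
          (primePi (x / p) : ℝ))
        - ∫ u in Real.sqrt (x / r)..Real.sqrt x, Li (x / u) / Real.log u| ≤
        C * (x / Real.log x * Real.exp (-c * Real.sqrt (Real.log (x / r)))) := by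
  obtain ⟨c, C, hc, hc1, hC, h⟩ := pi_bound
  set K1 : ℝ := 24 / (c / 4) ^ 4 with hK1
  set K2 : ℝ := 24 / (c / 2) ^ 4 with hK2
  have hK1p : 0 < K1 := by positivity
  have hK2p : 0 < K2 := by positivity
  refine ⟨c / 4, 2 * C * K1 + 16 * C + 16 * C + 2 * (2 * C * K2), by positivity, by positivity, ?_⟩
  intro x r hr hrx
  have hx4 : 4 ≤ x := by linarith
  have hx0 : 0 < x := by linarith
  have hr0 : 0 < r := by linarith
  have hz4 : 4 ≤ x / r := by rw [le_div_iff₀ hr0]; linarith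
  have hzx : x / r ≤ x := div_le_self hx0.le hr
  set a := Real.sqrt (x / r) with ha_def
  set B := Real.sqrt x with hB_def
  have ha : 2 ≤ a := Real.le_sqrt_of_sq_le (by linarith)
  have haB : a ≤ B := Real.sqrt_le_sqrt hzx
  have hBx : B ^ 2 = x := Real.sq_sqrt hx0.le
  have hB : 2 ≤ B := ha.trans haB
  have hlx : 1 / 2 ≤ Real.log x := half_le_log (by linarith)
  have hlB : Real.log B = Real.log x / 2 := Real.log_sqrt hx0.le
  have hge : ∀ t, 0 < t → t ≤ B → B ≤ x / t := by
    intro t ht htB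
    rw [le_div_iff₀ ht, ← hBx]; nlinarith
  change _ ≤ _ * (x / Real.log x * Er (c / 4) (x / r))
  set Q := x / Real.log x * Er (c / 4) (x / r) with hQ
  have hErp := Er_pos (c / 4) (x / r)
  -- the sum
  have hS : (Finset.range (⌊B⌋₊ + 1)).filter
            (fun p : ℕ => p.Prime ∧ a < (p : ℝ) ∧ (p : ℝ) ≤ B) = (Finset.Ioc ⌊a⌋₊ ⌊B⌋₊).filter Nat.Prime := by
    ext p
    simp only [Finset.mem_filter, Finset.mem_range, Finset.mem_Ioc, Nat.lt_succ_iff,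
      Nat.floor_lt (by linarith : 0 ≤ a), Nat.le_floor_iff (by linarith : 0 ≤ B)]
    tauto
  rw [hS]
  set S := (Finset.Ioc ⌊a⌋₊ ⌊B⌋₊).filter Nat.Prime with hSdef
  have hSmem : ∀ p ∈ S, a < (p:ℝ) ∧ (p:ℝ) ≤ B := by
    intro p hp
    rw [hSdef, Finset.mem_filter, Finset.mem_Ioc, Nat.floor_lt (by linarith : 0 ≤ a), Nat.le_floor_iff (by linarith : 0 ≤ B)] at hp
    exact hp.1
  -- first error
  have T1 : |∑ p ∈ S, (primePi (x / p) : ℝ) - ∑ p ∈ S, Li (x / p)| ≤ 2 * C * K1 * Q := by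
    rw [← Finset.sum_sub_distrib]
    have hEB : Er c B ≤ Er (c / 2) x := Er_sqrt hc.le (by linarith)
    have step : ∀ p ∈ S, |(primePi (x / p) : ℝ) - Li (x / p)| ≤ C * x * Er (c / 2) x * (p:ℝ)⁻¹ := by
      intro p hp
      obtain ⟨h1, h2⟩ := hSmem p hp
      have hp0 : (0:ℝ) < p := by linarith
      have h3 := hge p hp0 h2
      have h4 := h (x / p) (by linarith)
      have h5 : Er c (x / p) ≤ Er (c / 2) x := (Er_anti hc.le (by linarith) h3).trans hEB
      calc _ ≤ C * (x / p) * Er c (x / p) := h4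
        _ ≤ C * (x / p) * Er (c / 2) x := by gcongr
        _ = _ := by ring
    have hharm : ∑ p ∈ S, (p:ℝ)⁻¹ ≤ 2 * Real.log x := by
      have h1 : ∑ p ∈ S, (p:ℝ)⁻¹ ≤ ∑ p ∈ Finset.Icc 1 ⌊B⌋₊, (p:ℝ)⁻¹ := by
        refine Finset.sum_le_sum_of_subset_of_nonneg ?_ (fun _ _ _ => by positivity)
        intro p hp
        rw [hSdef, Finset.mem_filter, Finset.mem_Ioc] at hp
        rw [Finset.mem_Icc]; exact ⟨by omega, hp.1.2⟩
      have h2 := harmonic_floor_le_one_add_log B (by linarith)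
      rw [harmonic_eq_sum_Icc] at h2
      push_cast at h2
      have h3 : Real.log 4 ≤ Real.log x := Real.log_le_log (by norm_num) hx4
      have h4 : Real.log 4 = 2 * Real.log 2 := by
        rw [show (4:ℝ) = 2 ^ 2 by norm_num, Real.log_pow]; norm_num
      have h5 := Real.log_two_gt_d9
      norm_num at h5
      linarith
    have hEx : Er (c / 2) x = Er (c / 4) x * Er (c / 4) x := by rw [← Er_mul]; congr 1; ring
    have hL := log_sq_Er (c := c / 4) (by positivity) (by linarith : 1 ≤ x)
    have hEz : Er (c / 4) x ≤ Er (c / 4) (x / r) := Er_anti (by positivity) (by linarith) hzx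
    have hp1 := Er_pos (c / 4) x
    have hp2 := Er_pos (c / 2) x
    have hlp : 0 < Real.log x := by linarith
    calc _ ≤ ∑ p ∈ S, |(primePi (x / p) : ℝ) - Li (x / p)| := Finset.abs_sum_le_sum_abs _ _
      _ ≤ ∑ p ∈ S, C * x * Er (c / 2) x * (p:ℝ)⁻¹ := Finset.sum_le_sum step
      _ = C * x * Er (c / 2) x * ∑ p ∈ S, (p:ℝ)⁻¹ := by rw [Finset.mul_sum]
      _ ≤ C * x * Er (c / 2) x * (2 * Real.log x) := by gcongr
      _ = 2 * C * (Real.log x ^ 2 * Er (c / 4) x) * (x / Real.log x * Er (c / 4) x) := by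
        rw [hEx]; field_simp
      _ ≤ 2 * C * K1 * (x / Real.log x * Er (c / 4) (x / r)) := by gcongr
  have hab := abel_li ha haB hBx
  simp only [] at hab
  have hsum : ∑ k ∈ Finset.Ioc ⌊a⌋₊ ⌊B⌋₊, Li (x / k) * (if k.Prime then (1:ℝ) else 0) = ∑ p ∈ S, Li (x / p) := by
    rw [hSdef, Finset.sum_filter]
    refine Finset.sum_congr rfl (fun k _ => ?_)
    split_ifs <;> simp
  rw [hsum] at hab
  have hEa : Er (c / 2) a ≤ Er (c / 4) (x / r) := by
    have := Er_sqrt (c := c / 2) (z := x / r) (by positivity) (by linarith)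
    rwa [show c / 2 / 2 = c / 4 by ring] at this
  have hlog : ∀ t, 0 < t → t ≤ B → Real.log x / 2 ≤ Real.log (x / t) := by
    intro t ht htB
    rw [← hlB]; exact Real.log_le_log (by linarith) (hge t ht htB)
  have hend : ∀ t, a ≤ t → t ≤ B → |Li (x / t) * (primePi t - Li t)| ≤ 16 * C * Q := by
    intro t h1 h2
    have ht0 : 0 < t := by linarith
    have hL := Li_bound (y := x / t) (by linarith [hge t ht0 h2])
    have hE := h t (by linarith)
    have hl := hlog t ht0 h2
    have hEt : Er c t ≤ Er (c / 4) (x / r) :=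
      (Er_anti hc.le (by linarith) h1).trans ((Er_anti_c (by linarith) a).trans hEa)
    have hlp : 0 < Real.log x := by linarith
    rw [abs_mul]
    calc _ ≤ (8 * (x / t) / Real.log (x / t)) * (C * t * Er c t) := by
            gcongr
            exact (abs_nonneg _).trans hL
      _ ≤ (8 * (x / t) / (Real.log x / 2)) * (C * t * Er (c / 4) (x / r)) := by
            have := Er_pos c t
            gcongr
      _ = 16 * C * Q := by rw [hQ]; field_simp; ring
  have hI : |∫ t in a..B, 1 / Real.log (x / t) * (-(x / t ^ 2)) * (primePi t - Li t)| ≤ 2 * (2 * C * K2 * Q) := by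
    have hlp : 0 < Real.log x := by linarith
    refine int_inv_log_sq ha haB (by positivity) ?_
    intro t ht
    have ht0 : 0 < t := by linarith [ht.1]
    have hE := h t (by linarith [ht.1])
    have hl := hlog t ht0 ht.2
    have hlt := half_le_log (ha.trans ht.1.le)
    have hltp : 0 < Real.log t := by linarith
    have hEt : Er (c / 2) t ≤ Er (c / 4) (x / r) := (Er_anti (by positivity) (by linarith) ht.1.le).trans hEa
    have hEc : Er c t = Er (c / 2) t * Er (c / 2) t := by rw [← Er_mul]; congr 1; ring
    have hL := log_sq_Er (c := c / 2) (by positivity) (by linarith [ht.1] : 1 ≤ t)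
    have hlxt : 0 < Real.log (x / t) := by linarith
    have hp := Er_pos (c / 2) t
    rw [abs_mul, abs_mul, abs_neg, abs_of_pos (by positivity : 0 < x / t ^ 2), abs_of_pos (by positivity : 0 < 1 / Real.log (x / t))]
    calc _ ≤ 1 / (Real.log x / 2) * (x / t ^ 2) * (C * t * Er c t) := by gcongr
      _ = 2 * C * (Real.log t ^ 2 * Er (c / 2) t) * (x / Real.log x * Er (c / 2) t) * (1 / (t * Real.log t ^ 2)) := by
        rw [hEc]; field_simp
      _ ≤ 2 * C * K2 * (x / Real.log x * Er (c / 4) (x / r)) * (1 / (t * Real.log t ^ 2)) := by gcongr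
  have hB1 := hend B haB le_rfl
  have hB2 := hend a le_rfl haB
  rw [abs_le] at T1 hI hB1 hB2 ⊢
  constructor <;> linarith [hab, T1.1, T1.2, hI.1, hI.2]

end

theorem stmt_16 :
    ∃ c C : ℝ, 0 < c ∧ 0 < C ∧ ∀ x r : ℝ, 1 ≤ r → r ≤ x / 4 →
      |(∑ p ∈ (Finset.range (⌊Real.sqrt x⌋₊ + 1)).filter
            (fun p : ℕ => p.Prime ∧ Real.sqrt (x / r) < (p : ℝ) ∧ (p : ℝ) ≤ Real.sqrt x),
          (primePi (x / p) : ℝ))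
        - ∫ u in Real.sqrt (x / r)..Real.sqrt x, Li (x / u) / Real.log u| ≤
        C * (x / Real.log x * Real.exp (-c * Real.sqrt (Real.log (x / r)))) := by
  exact stmt_aux
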